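/- arXiv:0904.1393 — 2 statements merged into one kernel-verified Lean document; each statement's English description precedes it below -/
import Mathlib

section
/- Consider the equation x″ + f(t, x/t) = 0 for t ≥ t₀ ≥ 1, where f : [t₀,∞) × ℝ → ℝ is continuous with continuous partial derivative ∂f/∂v, and assume: (i) v·f(t,v) ≤ 0 and ∂f/∂v(t,v) ≤ 0 for all t ≥ t₀, v ∈ ℝ; (ii) |f(t,v)| ≤ a(t)·g(|v|) for all t ≥ t₀, v ∈ ℝ, where a : [t₀,∞) → [0,∞) and g : [0,∞) → [0,∞) are continuous, g(α) > 0 for every α > 0, g is monotone nondecreasing; (iii) K := ∫_{t₀}^{∞} t·a(t) dt < +∞ and ∫_{1}^{∞} dξ/g(ξ) < +∞. Then every solution x of the equation whose initial data u₀ = t₀x′(t₀) − x(t₀), v₀ = x(t₀)/t₀ satisfy (4/t₀)·(K + c/g(1)) < ∫_{1+|v₀|}^{∞} dξ/g(ξ), where c = 1 + u₀²/2, is defined on all of [t₀,∞) and satisfies either x(t) = o(t) as t → +∞, or x(t) = x₁t + x₂ + o(1) with x₁ ≠ 0 as t → +∞. -/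
open Filter Set Asymptotics MeasureTheory

open scoped NNReal Topology

/-!
In the unknowns `u = t x' - x` and `v = x / t` the equation is the system `u' = -t f (t, v)`,
`v' = u / t ^ 2`. Bihari's argument bounds `(u, v)`: with `w = A + ∫ ‖u‖ / s ^ 2 ≥ ‖v‖` the growth
condition gives `‖u‖ ≤ C * g w`, where `C = ‖u t₀‖ / g A + ∫ s * a s`, hence `w' / g w ≤ C / t ^ 2`,
and `∫ dξ / g ξ` along `w` never exceeds `C / t₀`. Bounded derivatives give `(u, v)` a limit at a
finite endpoint, from which the solution could be continued, so a maximal solution is global.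
At infinity `u'` is integrable, so `u → U`, and `(v + U / t)' = (u - U) / t ^ 2` yields
`v + U / t = V + o(1 / t)`, that is, `x = V t - U + o(1)`.
-/

section Comparison

variable {g : ℝ → ℝ} {A : ℝ}

lemma antitoneOn_one_div_of_monotoneOn (hg : MonotoneOn g (Ici A)) (hA : 0 < g A) :
    AntitoneOn (fun ξ => 1 / g ξ) (Ici A) := fun _ hα _ hβ hαβ =>
  one_div_le_one_div_of_le (hA.trans_le (hg self_mem_Ici hα hα)) (hg hα hβ hαβ)

lemma intervalIntegrable_one_div_of_monotoneOn (hg : MonotoneOn g (Ici A)) (hA : 0 < g A)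
    {α β : ℝ} (hα : A ≤ α) (hβ : A ≤ β) :
    IntervalIntegrable (fun ξ => 1 / g ξ) volume α β :=
  ((antitoneOn_one_div_of_monotoneOn hg hA).mono
    (ordConnected_Ici.uIcc_subset hα hβ)).intervalIntegrable

lemma integral_one_div_le_of_monotoneOn (hg : MonotoneOn g (Ici A)) (hA : 0 < g A)
    {α β : ℝ} (hα : A ≤ α) (hαβ : α ≤ β) :
    ∫ ξ in α..β, 1 / g ξ ≤ (β - α) / g α := by
  calc ∫ ξ in α..β, 1 / g ξ
      ≤ ∫ _ in α..β, 1 / g α := by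
        refine intervalIntegral.integral_mono_on hαβ
          (intervalIntegrable_one_div_of_monotoneOn hg hA hα (hα.trans hαβ))
          intervalIntegrable_const fun ξ hξ => ?_
        exact antitoneOn_one_div_of_monotoneOn hg hA hα (hα.trans hξ.1) hξ.1
    _ = (β - α) / g α := by
        rw [intervalIntegral.integral_const, smul_eq_mul, mul_one_div]

lemma continuousOn_integral_one_div_of_monotoneOn (hg : MonotoneOn g (Ici A)) (hA : 0 < g A)
    (M : ℝ) : ContinuousOn (fun z => ∫ ξ in A..z, 1 / g ξ) (Icc A M) := by
  rcases lt_or_ge M A with hM | hM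
  · simp [Icc_eq_empty_of_lt hM]
  · have h := intervalIntegrable_one_div_of_monotoneOn hg hA le_rfl hM
    simpa only [uIcc_of_le hM] using
      intervalIntegral.continuousOn_primitive_interval' h left_mem_uIcc

/-- `g` may be discontinuous: since `1 / g` is antitone, the right slopes at `t` of
`t ↦ ∫ ξ in A..w t, 1 / g ξ` are at most those of `w` divided by `g (w t)`. -/
lemma integral_one_div_le_of_deriv_right_le_mul (hg : MonotoneOn g (Ici A)) (hA : 0 < g A)
    {w w' φ φ' : ℝ → ℝ} {a b : ℝ} (hab : a ≤ b)
    (hw : ContinuousOn w (Icc a b)) (hw_mono : MonotoneOn w (Icc a b)) (hwa : w a = A)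
    (hw' : ∀ t ∈ Ico a b, HasDerivWithinAt w (w' t) (Ici t) t)
    (hφ : ContinuousOn φ (Icc a b)) (hφ' : ∀ t ∈ Ico a b, HasDerivWithinAt φ (φ' t) (Ici t) t)
    (hle : ∀ t ∈ Ico a b, w' t ≤ φ' t * g (w t)) :
    ∫ ξ in A..w b, 1 / g ξ ≤ φ b - φ a := by
  have hAw : ∀ t ∈ Icc a b, A ≤ w t := fun t ht =>
    hwa.ge.trans (hw_mono (left_mem_Icc.2 hab) ht ht.1)
  have hG : ContinuousOn (fun t => ∫ ξ in A..w t, 1 / g ξ) (Icc a b) :=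
    (continuousOn_integral_one_div_of_monotoneOn hg hA (w b)).comp hw fun t ht =>
      ⟨hAw t ht, hw_mono ht (right_mem_Icc.2 hab) ht.2⟩
  refine image_le_of_liminf_slope_right_le_deriv_boundary (B := fun t => φ t - φ a) hG
    (by simp [hwa]) (hφ.sub continuousOn_const)
    (fun t ht => (hφ' t ht).sub_const (φ a)) (fun t ht r hr => ?_) (right_mem_Icc.2 hab)
  have hgw : 0 < g (w t) :=
    hA.trans_le (hg self_mem_Ici (hAw t (Ico_subset_Icc_self ht)) (hAw t (Ico_subset_Icc_self ht)))
  have hslope_lt : ∀ᶠ z in 𝓝[>] t, slope w t z / g (w t) < r := by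
    refine ((hasDerivWithinAt_iff_tendsto_slope' self_notMem_Ioi).1
      (hw' t ht).Ioi_of_Ici).div_const _ |>.eventually_lt_const ?_
    exact ((div_le_iff₀ hgw).2 (hle t ht)).trans_lt hr
  refine Eventually.frequently ?_
  filter_upwards [hslope_lt, Ioc_mem_nhdsGT ht.2] with z hz hzb
  have hz_mem : z ∈ Icc a b := ⟨ht.1.trans hzb.1.le, hzb.2⟩
  have hwz : w t ≤ w z := hw_mono (Ico_subset_Icc_self ht) hz_mem hzb.1.le
  refine lt_of_le_of_lt ?_ hz
  have hAt := hAw t (Ico_subset_Icc_self ht)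
  rw [slope_def_field, slope_def_field, intervalIntegral.integral_interval_sub_left
    (intervalIntegrable_one_div_of_monotoneOn hg hA le_rfl (hAw z hz_mem))
    (intervalIntegrable_one_div_of_monotoneOn hg hA le_rfl hAt), div_right_comm]
  exact div_le_div_of_nonneg_right (integral_one_div_le_of_monotoneOn hg hA hAt hwz)
    (sub_nonneg.2 hzb.1.le)

lemma lt_of_integral_one_div_lt (hg : MonotoneOn g (Ici A)) (hA : 0 < g A) {α β : ℝ}
    (hα : A ≤ α) (hβ : A ≤ β) (h : ∫ ξ in A..α, 1 / g ξ < ∫ ξ in A..β, 1 / g ξ) : α < β := by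
  contrapose! h
  refine intervalIntegral.integral_mono_interval le_rfl hβ h ?_
    (intervalIntegrable_one_div_of_monotoneOn hg hA le_rfl hα)
  filter_upwards [ae_restrict_mem measurableSet_Ioc] with ξ hξ
  exact one_div_nonneg.2 (hA.le.trans (hg self_mem_Ici hξ.1.le hξ.1.le))

end Comparison

lemma exists_lt_intervalIntegral_of_lt_integral_Ici {h : ℝ → ℝ} {A c : ℝ}
    (hh : IntegrableOn h (Ici A)) (hc : c < ∫ ξ in Ici A, h ξ) :
    ∃ W, A ≤ W ∧ c < ∫ ξ in A..W, h ξ := by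
  rw [integral_Ici_eq_integral_Ioi] at hc
  have hlim := intervalIntegral_tendsto_integral_Ioi A (hh.mono_set Ioi_subset_Ici_self) tendsto_id
  exact ((eventually_ge_atTop A).and (hlim.eventually (lt_mem_nhds hc))).exists

lemma intervalIntegral_le_setIntegral_Ici {b : ℝ → ℝ} {t₀ t : ℝ} (ht : t₀ ≤ t)
    (hb : ∀ s ∈ Ici t₀, 0 ≤ b s) (hb_int : IntegrableOn b (Ici t₀)) :
    ∫ s in t₀..t, b s ≤ ∫ s in Ici t₀, b s := by
  rw [intervalIntegral.integral_of_le ht]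
  refine setIntegral_mono_set hb_int ?_ (Ioc_subset_Icc_self.trans Icc_subset_Ici_self).eventuallyLE
  filter_upwards [ae_restrict_mem measurableSet_Ici] with s hs using hb s hs

section Limits

variable {α E M : Type*}

lemma exists_tendsto_of_dist_le_dist [PseudoMetricSpace E] [CompleteSpace E] [PseudoMetricSpace M]
    {p : α → E} {β : α → M} {l : Filter α} {S : Set α} (hS : S ∈ l)
    (h : ∀ s ∈ S, ∀ t ∈ S, dist (p s) (p t) ≤ dist (β s) (β t)) (hβ : Cauchy (map β l)) :
    ∃ P, Tendsto p l (𝓝 P) := by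
  have : l.NeBot := (map_neBot_iff β).1 hβ.1
  refine cauchy_map_iff_exists_tendsto.1 ?_
  rw [Metric.cauchy_iff] at hβ ⊢
  refine ⟨inferInstance, fun ε hε => ?_⟩
  obtain ⟨V, hV, hVε⟩ := hβ.2 ε hε
  refine ⟨p '' (S ∩ β ⁻¹' V), image_mem_map (inter_mem hS hV), ?_⟩
  rintro _ ⟨s, hs, rfl⟩ _ ⟨t, ht, rfl⟩
  exact (h s hs.1 t ht.1).trans_lt (hVε _ hs.2 _ ht.2)

variable [NormedAddCommGroup E] [NormedSpace ℝ E]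

lemma norm_sub_le_integral_of_hasDerivAt {p p' : ℝ → E} {B : ℝ → ℝ} {a b : ℝ} (hab : a ≤ b)
    (hp : ∀ t ∈ Icc a b, HasDerivAt p (p' t) t) (hB : ∀ t ∈ Icc a b, ‖p' t‖ ≤ B t)
    (hB_int : IntervalIntegrable B volume a b) : ‖p b - p a‖ ≤ ∫ t in a..b, B t := by
  refine norm_sub_le_integral_of_norm_deriv_le_of_le hab (HasDerivAt.continuousOn hp)
    (fun t ht => (hp t (Ioo_subset_Icc_self ht)).differentiableAt.differentiableWithinAt)
    (Eventually.of_forall fun t ht => ?_) hB_int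
  rw [(hp t (Ioo_subset_Icc_self ht)).deriv]
  exact hB t (Ioo_subset_Icc_self ht)

lemma exists_tendsto_of_norm_deriv_le [CompleteSpace E] {p p' : ℝ → E} {B : ℝ → ℝ} {S : Set ℝ}
    {l : Filter ℝ} [l.NeBot] {c b : ℝ} [S.OrdConnected] (hS : S ∈ l) (hc : c ∈ S)
    (hp : ∀ t ∈ S, HasDerivAt p (p' t) t) (hB : ∀ t ∈ S, ‖p' t‖ ≤ B t) (hB_int : IntegrableOn B S)
    (hlim : Tendsto (fun t => ∫ s in c..t, B s) l (𝓝 b)) : ∃ P, Tendsto p l (𝓝 P) := by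
  have hint : ∀ s ∈ S, ∀ t ∈ S, IntervalIntegrable B volume s t := fun s hs t ht =>
    (hB_int.mono_set (OrdConnected.uIcc_subset ‹_› hs ht)).intervalIntegrable
  refine exists_tendsto_of_dist_le_dist hS (fun s hs t ht => ?_) hlim.cauchy_map
  wlog hst : s ≤ t generalizing s t
  · simpa only [dist_comm] using this t ht s hs (le_of_not_ge hst)
  have hsub : Icc s t ⊆ S := OrdConnected.out ‹_› hs ht
  rw [dist_comm, dist_eq_norm, dist_comm, Real.dist_eq,
    intervalIntegral.integral_interval_sub_left (hint c hc t ht) (hint c hc s hs)]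
  exact (norm_sub_le_integral_of_hasDerivAt hst (fun r hr => hp r (hsub hr))
    (fun r hr => hB r (hsub hr)) (hint s hs t ht)).trans (le_abs_self _)

lemma exists_tendsto_nhdsLT_of_norm_deriv_le [CompleteSpace E] {p p' : ℝ → E} {B : ℝ → ℝ}
    {a T : ℝ} (haT : a < T) (hp : ∀ t ∈ Ico a T, HasDerivAt p (p' t) t)
    (hB : ∀ t ∈ Ico a T, ‖p' t‖ ≤ B t) (hB_int : IntegrableOn B (Ico a T)) :
    ∃ P, Tendsto p (𝓝[<] T) (𝓝 P) := by
  have hcont := intervalIntegral.continuousOn_primitive_interval' (a := a)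
    ((intervalIntegrable_iff_integrableOn_Ico_of_le haT.le).2 hB_int) left_mem_uIcc
  rw [uIcc_of_le haT.le] at hcont
  exact exists_tendsto_of_norm_deriv_le (Ico_mem_nhdsLT haT) (left_mem_Ico.2 haT) hp hB hB_int
    ((hcont T (right_mem_Icc.2 haT.le)).mono_of_mem_nhdsWithin (Icc_mem_nhdsLT haT))

lemma exists_tendsto_atTop_of_norm_deriv_le [CompleteSpace E] {p p' : ℝ → E} {B : ℝ → ℝ}
    {a : ℝ} (hp : ∀ t ∈ Ici a, HasDerivAt p (p' t) t)
    (hB : ∀ t ∈ Ici a, ‖p' t‖ ≤ B t) (hB_int : IntegrableOn B (Ici a)) :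
    ∃ P, Tendsto p atTop (𝓝 P) :=
  exists_tendsto_of_norm_deriv_le (Ici_mem_atTop a) self_mem_Ici hp hB hB_int
    (intervalIntegral_tendsto_integral_Ioi a (hB_int.mono_set Ioi_subset_Ici_self) tendsto_id)

lemma norm_sub_le_of_hasDerivAt_inv_sq_smul {z r : ℝ → E} {ε s t : ℝ} (hs : 0 < s) (hst : s ≤ t)
    (hz : ∀ τ ∈ Icc s t, HasDerivAt z ((τ ^ 2)⁻¹ • r τ) τ) (hr : ∀ τ ∈ Icc s t, ‖r τ‖ ≤ ε) :
    ‖z t - z s‖ ≤ ε * (s⁻¹ - t⁻¹) := by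
  have hB : ∀ τ ∈ Icc s t, HasDerivAt (fun τ => ε * (s⁻¹ - τ⁻¹)) (ε * (τ ^ 2)⁻¹) τ := by
    intro τ hτ
    simpa using ((hasDerivAt_inv (hs.trans_le hτ.1).ne').const_sub s⁻¹).const_mul ε
  refine image_norm_le_of_norm_deriv_right_le_deriv_boundary' (f := fun τ => z τ - z s)
    (a := s) (b := t) ((HasDerivAt.continuousOn hz).sub continuousOn_const)
    (fun τ hτ => ((hz τ (Ico_subset_Icc_self hτ)).sub_const (z s)).hasDerivWithinAt) (by simp)
    (HasDerivAt.continuousOn hB)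
    (fun τ hτ => (hB τ (Ico_subset_Icc_self hτ)).hasDerivWithinAt) (fun τ hτ => ?_)
    (right_mem_Icc.2 hst)
  rw [norm_smul, Real.norm_of_nonneg (by positivity), mul_comm]
  exact mul_le_mul_of_nonneg_right (hr τ (Ico_subset_Icc_self hτ)) (by positivity)

lemma exists_isLittleO_sub_of_hasDerivAt_inv_sq_smul [CompleteSpace E] {z r : ℝ → E}
    (hz : ∀ᶠ t in atTop, HasDerivAt z ((t ^ 2)⁻¹ • r t) t) (hr : Tendsto r atTop (𝓝 0)) :
    ∃ V, (fun t => z t - V) =o[atTop] fun t => t⁻¹ := by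
  have hincr : ∀ ε > 0, ∀ᶠ s in atTop, ∀ t ≥ s, ‖z t - z s‖ ≤ ε * s⁻¹ := by
    intro ε hε
    have hr_small := hr.norm.eventually_le_const (by simpa using hε)
    obtain ⟨N, hN⟩ := eventually_atTop.1 (hz.and hr_small)
    filter_upwards [eventually_ge_atTop N, eventually_gt_atTop 0] with s hNs hs t hst
    refine (norm_sub_le_of_hasDerivAt_inv_sq_smul hs hst
      (fun τ hτ => (hN τ (hNs.trans hτ.1)).1) (fun τ hτ => (hN τ (hNs.trans hτ.1)).2)).trans ?_
    have : 0 ≤ t⁻¹ := inv_nonneg.2 (hs.le.trans hst)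
    gcongr
    linarith
  have hcauchy : CauchySeq z := by
    refine Metric.cauchySeq_iff'.2 fun ε hε => ?_
    obtain ⟨s, hs, hs2⟩ := ((hincr (ε / 2) (half_pos hε)).and (eventually_ge_atTop 1)).exists
    refine ⟨s, fun t hst => ?_⟩
    rw [dist_eq_norm]
    calc ‖z t - z s‖ ≤ ε / 2 * s⁻¹ := hs t hst
      _ ≤ ε / 2 * 1 := by gcongr; exact inv_le_one_of_one_le₀ hs2
      _ < ε := by linarith
  obtain ⟨V, hV⟩ := cauchySeq_tendsto_of_complete hcauchy
  refine ⟨V, isLittleO_iff.2 fun ε hε => ?_⟩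
  filter_upwards [hincr ε hε, eventually_gt_atTop 0] with s hs hs0
  rw [norm_sub_rev, Real.norm_of_nonneg (inv_nonneg.2 hs0.le)]
  exact le_of_tendsto (hV.sub_const (z s)).norm (eventually_atTop.2 ⟨s, hs⟩)

end Limits

section Apriori

variable {E : Type*} [NormedAddCommGroup E] {u : ℝ → E} {A t₀ t₁ : ℝ}

/-- The majorant `w t = A + ∫ s in t₀..t, ‖u s‖ / s ^ 2` of `‖v‖` along a solution of
`v' = u / t ^ 2` with `‖v t₀‖ ≤ A`. -/
noncomputable def slopeMajorant (u : ℝ → E) (A t₀ t : ℝ) : ℝ :=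
  A + ∫ s in t₀..t, (s ^ 2)⁻¹ * ‖u s‖

@[simp]
lemma slopeMajorant_self (u : ℝ → E) (A t₀ : ℝ) : slopeMajorant u A t₀ t₀ = A := by
  simp [slopeMajorant]

lemma continuousOn_inv_sq_mul_norm (ht₀ : 0 < t₀) (hu : ContinuousOn u (Icc t₀ t₁)) :
    ContinuousOn (fun s => (s ^ 2)⁻¹ * ‖u s‖) (Icc t₀ t₁) :=
  (continuousOn_pow 2 |>.inv₀ fun _ hs => (pow_pos (ht₀.trans_le hs.1) 2).ne').mul hu.norm

lemma intervalIntegrable_inv_sq_mul_norm (ht₀ : 0 < t₀) (hu : ContinuousOn u (Icc t₀ t₁))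
    {s t : ℝ} (hs : s ∈ Icc t₀ t₁) (ht : t ∈ Icc t₀ t₁) :
    IntervalIntegrable (fun s => (s ^ 2)⁻¹ * ‖u s‖) volume s t :=
  ((continuousOn_inv_sq_mul_norm ht₀ hu).mono
    (ordConnected_Icc.uIcc_subset hs ht)).intervalIntegrable

lemma hasDerivWithinAt_slopeMajorant (ht₀ : 0 < t₀) (hu : ContinuousOn u (Icc t₀ t₁)) {t : ℝ}
    (ht : t ∈ Icc t₀ t₁) :
    HasDerivWithinAt (slopeMajorant u A t₀) ((t ^ 2)⁻¹ * ‖u t‖) (Icc t₀ t₁) t := by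
  have : Fact (t ∈ Icc t₀ t₁) := ⟨ht⟩
  have hcont := continuousOn_inv_sq_mul_norm ht₀ hu
  exact (intervalIntegral.integral_hasDerivWithinAt_right
    (intervalIntegrable_inv_sq_mul_norm ht₀ hu (left_mem_Icc.2 (ht.1.trans ht.2)) ht)
    (hcont.stronglyMeasurableAtFilter_nhdsWithin measurableSet_Icc t) (hcont t ht)).const_add A

lemma monotoneOn_slopeMajorant (ht₀ : 0 < t₀) (hu : ContinuousOn u (Icc t₀ t₁)) :
    MonotoneOn (slopeMajorant u A t₀) (Icc t₀ t₁) := by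
  intro s hs t ht hst
  have h₀ : t₀ ∈ Icc t₀ t₁ := left_mem_Icc.2 (hs.1.trans hs.2)
  have hdiff := intervalIntegral.integral_interval_sub_left
    (intervalIntegrable_inv_sq_mul_norm ht₀ hu h₀ ht)
    (intervalIntegrable_inv_sq_mul_norm ht₀ hu h₀ hs)
  refine (add_le_add_iff_left A).2 (sub_nonneg.1 (hdiff ▸ ?_))
  exact intervalIntegral.integral_nonneg hst fun τ _ => by positivity

lemma le_slopeMajorant (ht₀ : 0 < t₀) (hu : ContinuousOn u (Icc t₀ t₁)) {t : ℝ}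
    (ht : t ∈ Icc t₀ t₁) : A ≤ slopeMajorant u A t₀ t := by
  simpa using monotoneOn_slopeMajorant (A := A) ht₀ hu (left_mem_Icc.2 (ht.1.trans ht.2)) ht ht.1

variable [NormedSpace ℝ E] {u' v : ℝ → E} {b g : ℝ → ℝ} {K W : ℝ}

lemma norm_le_slopeMajorant (ht₀ : 0 < t₀) (hu : ContinuousOn u (Icc t₀ t₁))
    (hv : ∀ t ∈ Icc t₀ t₁, HasDerivAt v ((t ^ 2)⁻¹ • u t) t) (hA : ‖v t₀‖ ≤ A) {t : ℝ}
    (ht : t ∈ Icc t₀ t₁) : ‖v t‖ ≤ slopeMajorant u A t₀ t := by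
  have hincr : ‖v t - v t₀‖ ≤ ∫ s in t₀..t, (s ^ 2)⁻¹ * ‖u s‖ := by
    refine norm_sub_le_integral_of_hasDerivAt ht.1 (fun s hs => hv s ⟨hs.1, hs.2.trans ht.2⟩)
      (fun s _ => ?_) (intervalIntegrable_inv_sq_mul_norm ht₀ hu
        (left_mem_Icc.2 (ht.1.trans ht.2)) ht)
    rw [norm_smul, Real.norm_of_nonneg (by positivity)]
  calc ‖v t‖ ≤ ‖v t₀‖ + ‖v t - v t₀‖ := norm_le_norm_add_norm_sub' _ _
    _ ≤ slopeMajorant u A t₀ t := add_le_add hA hincr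

lemma norm_le_mul_slopeMajorant (ht₀ : 0 < t₀)
    (hu : ∀ t ∈ Icc t₀ t₁, HasDerivAt u (u' t) t)
    (hv : ∀ t ∈ Icc t₀ t₁, HasDerivAt v ((t ^ 2)⁻¹ • u t) t) (hA : ‖v t₀‖ ≤ A)
    (hg : MonotoneOn g (Ici 0)) (hgA : 0 < g A) (hb : ∀ t ∈ Icc t₀ t₁, 0 ≤ b t)
    (hb_int : IntervalIntegrable b volume t₀ t₁) (hbK : ∫ t in t₀..t₁, b t ≤ K)
    (hu' : ∀ t ∈ Icc t₀ t₁, ‖u' t‖ ≤ b t * g ‖v t‖) {t : ℝ} (ht : t ∈ Icc t₀ t₁) :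
    ‖u t‖ ≤ (‖u t₀‖ / g A + K) * g (slopeMajorant u A t₀ t) := by
  have hu_cont : ContinuousOn u (Icc t₀ t₁) := HasDerivAt.continuousOn hu
  have hA₀ : 0 ≤ A := (norm_nonneg _).trans hA
  set w := slopeMajorant u A t₀
  have hw₀ : 0 ≤ w t := hA₀.trans (le_slopeMajorant ht₀ hu_cont ht)
  have hgAw : g A ≤ g (w t) := hg hA₀ hw₀ (le_slopeMajorant ht₀ hu_cont ht)
  have hsub : Icc t₀ t ⊆ Icc t₀ t₁ := Icc_subset_Icc_right ht.2
  have hu'w : ∀ s ∈ Icc t₀ t, ‖u' s‖ ≤ b s * g (w t) := by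
    intro s hs
    have hvw : ‖v s‖ ≤ w t := (norm_le_slopeMajorant ht₀ hu_cont hv hA (hsub hs)).trans
      (monotoneOn_slopeMajorant ht₀ hu_cont (hsub hs) ht hs.2)
    exact (hu' s (hsub hs)).trans
      (mul_le_mul_of_nonneg_left (hg (norm_nonneg _) hw₀ hvw) (hb s (hsub hs)))
  have hbt : ∫ s in t₀..t, b s ≤ K := by
    refine (intervalIntegral.integral_mono_interval le_rfl ht.1 ht.2 ?_ hb_int).trans hbK
    filter_upwards [ae_restrict_mem measurableSet_Ioc] with s hs using hb s (Ioc_subset_Icc_self hs)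
  calc ‖u t‖ ≤ ‖u t₀‖ + ‖u t - u t₀‖ := norm_le_norm_add_norm_sub' _ _
    _ ≤ ‖u t₀‖ + ∫ s in t₀..t, b s * g (w t) := by
        gcongr
        exact norm_sub_le_integral_of_hasDerivAt ht.1 (fun s hs => hu s (hsub hs)) hu'w
          ((hb_int.mono_set (by simpa [uIcc_of_le, ht.1, ht.1.trans ht.2] using hsub)).mul_const _)
    _ = ‖u t₀‖ / g A * g A + (∫ s in t₀..t, b s) * g (w t) := by
        rw [intervalIntegral.integral_mul_const, div_mul_cancel₀ _ hgA.ne']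
    _ ≤ ‖u t₀‖ / g A * g (w t) + K * g (w t) := by gcongr; exact hgA.le.trans hgAw
    _ = (‖u t₀‖ / g A + K) * g (w t) := (add_mul _ _ _).symm

lemma norm_le_of_div_lt_integral_one_div (ht₀ : 0 < t₀) (h₀₁ : t₀ ≤ t₁)
    (hu : ∀ t ∈ Icc t₀ t₁, HasDerivAt u (u' t) t)
    (hv : ∀ t ∈ Icc t₀ t₁, HasDerivAt v ((t ^ 2)⁻¹ • u t) t) (hA : ‖v t₀‖ ≤ A)
    (hg : MonotoneOn g (Ici 0)) (hgA : 0 < g A) (hb : ∀ t ∈ Icc t₀ t₁, 0 ≤ b t)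
    (hb_int : IntervalIntegrable b volume t₀ t₁) (hbK : ∫ t in t₀..t₁, b t ≤ K)
    (hu' : ∀ t ∈ Icc t₀ t₁, ‖u' t‖ ≤ b t * g ‖v t‖) (hAW : A ≤ W)
    (hW : (‖u t₀‖ / g A + K) / t₀ < ∫ ξ in A..W, 1 / g ξ) :
    ‖u t₁‖ ≤ (‖u t₀‖ / g A + K) * g W ∧ ‖v t₁‖ ≤ W := by
  have hu_cont : ContinuousOn u (Icc t₀ t₁) := HasDerivAt.continuousOn hu
  have ht₁ : t₁ ∈ Icc t₀ t₁ := right_mem_Icc.2 h₀₁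
  have hA₀ : 0 ≤ A := (norm_nonneg _).trans hA
  have hgA_mono : MonotoneOn g (Ici A) := hg.mono (Ici_subset_Ici.2 hA₀)
  have hAw := le_slopeMajorant (A := A) ht₀ hu_cont ht₁
  have hbound := fun t (ht : t ∈ Icc t₀ t₁) =>
    norm_le_mul_slopeMajorant ht₀ hu hv hA hg hgA hb hb_int hbK hu' ht
  set C := ‖u t₀‖ / g A + K
  have hC : 0 ≤ C := by
    have := (intervalIntegral.integral_nonneg h₀₁ hb).trans hbK
    positivity
  have hφ : ∀ t ∈ Icc t₀ t₁, HasDerivAt (fun t => C * (t₀⁻¹ - t⁻¹)) (C * (t ^ 2)⁻¹) t :=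
    fun t ht => by
      simpa using ((hasDerivAt_inv (ht₀.trans_le ht.1).ne').const_sub t₀⁻¹).const_mul C
  have hbihari : ∫ ξ in A..slopeMajorant u A t₀ t₁, 1 / g ξ ≤
      C * (t₀⁻¹ - t₁⁻¹) - C * (t₀⁻¹ - t₀⁻¹) := by
    refine integral_one_div_le_of_deriv_right_le_mul hgA_mono hgA h₀₁
      (fun t ht => (hasDerivWithinAt_slopeMajorant ht₀ hu_cont ht).continuousWithinAt)
      (monotoneOn_slopeMajorant ht₀ hu_cont)
      (slopeMajorant_self u A t₀) (fun t ht => (hasDerivWithinAt_slopeMajorant ht₀ hu_cont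
        (Ico_subset_Icc_self ht)).mono_of_mem_nhdsWithin (Icc_mem_nhdsGE_of_mem ht))
      (HasDerivAt.continuousOn hφ) (fun t ht => (hφ t (Ico_subset_Icc_self ht)).hasDerivWithinAt)
      fun t ht => ?_
    rw [mul_comm C, mul_assoc]
    exact mul_le_mul_of_nonneg_left (hbound t (Ico_subset_Icc_self ht)) (by positivity)
  have hwW : slopeMajorant u A t₀ t₁ < W := by
    refine lt_of_integral_one_div_lt hgA_mono hgA hAw hAW (hbihari.trans_lt (lt_of_le_of_lt ?_ hW))
    have : 0 ≤ C * t₁⁻¹ := mul_nonneg hC (inv_nonneg.2 (ht₀.le.trans h₀₁))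
    rw [div_eq_mul_inv]
    linarith
  refine ⟨(hbound t₁ ht₁).trans (mul_le_mul_of_nonneg_left (hg ?_ ?_ hwW.le) hC),
    (norm_le_slopeMajorant ht₀ hu_cont hv hA ht₁).trans hwW.le⟩
  exacts [hA₀.trans hAw, hA₀.trans hAW]

end Apriori

section Extension

variable {X E : Type*} [TopologicalSpace X]

/-- Local Lipschitz continuity of `f t v` in `v`, locally uniformly in `t ∈ s`: the regularity
required by the Picard–Lindelöf theorem. -/
def LocallyLipschitzSndOn [PseudoEMetricSpace E] {F : Type*} [PseudoEMetricSpace F]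
    (f : X → E → F) (s : Set X) : Prop :=
  ∀ t ∈ s, ∀ v, ∃ K : ℝ≥0, ∃ U ∈ 𝓝 v, ∀ᶠ τ in 𝓝[s] t, LipschitzOnWith K (f τ) U

variable [NormedAddCommGroup E] [NormedSpace ℝ E]

lemma locallyLipschitzSndOn_of_hasDerivAt {f fv : X → ℝ → E} {s : Set X}
    (hf : ∀ t ∈ s, ∀ v, HasDerivAt (f t) (fv t v) v)
    (hfv : ContinuousOn (Function.uncurry fv) (s ×ˢ univ)) : LocallyLipschitzSndOn f s := by
  intro t ht v
  have hbound : ∀ᶠ q in 𝓝[s] t ×ˢ 𝓝 v, ‖fv q.1 q.2‖₊ < ‖fv t v‖₊ + 1 := by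
    have hcont := hfv (t, v) ⟨ht, mem_univ v⟩
    rw [ContinuousWithinAt, nhdsWithin_prod_eq, nhdsWithin_univ] at hcont
    exact hcont.nnnorm.eventually_lt_const (lt_add_one _)
  obtain ⟨S, hS, V, hV, hSV⟩ := mem_prod_iff.1 hbound
  obtain ⟨δ, hδ, hδV⟩ := Metric.mem_nhds_iff.1 hV
  refine ⟨‖fv t v‖₊ + 1, Metric.ball v δ, Metric.ball_mem_nhds v hδ, ?_⟩
  filter_upwards [hS, self_mem_nhdsWithin] with τ hτS hτ
  exact (convex_ball v δ).lipschitzOnWith_of_nnnorm_hasDerivWithin_le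
    (fun w _ => (hf τ hτ w).hasDerivWithinAt)
    fun w hw => (hSV (mk_mem_prod hτS (hδV hw))).le

lemma hasDerivAt_piecewise_Iio {γ α γ' : ℝ → E} {c : E} {a T : ℝ} (haT : a < T)
    (hγ : ∀ t ∈ Ico a T, HasDerivAt γ (γ' t) t)
    (hγT : Tendsto γ (𝓝[<] T) (𝓝 (α T))) (hγ'T : Tendsto γ' (𝓝[<] T) (𝓝 c))
    (hα : HasDerivAt α c T) : HasDerivAt ((Iio T).piecewise γ α) c T := by
  have hT : (Iio T).piecewise γ α T = α T := piecewise_eq_of_notMem _ _ _ self_notMem_Iio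
  have hderiv : ∀ t ∈ Ioo a T, HasDerivAt ((Iio T).piecewise γ α) (γ' t) t := fun t ht =>
    (hγ t (Ioo_subset_Ico_self ht)).congr_of_eventuallyEq
      ((piecewise_eqOn _ _ _).eventuallyEq_of_mem (Iio_mem_nhds ht.2))
  have hleft : HasDerivWithinAt ((Iio T).piecewise γ α) c (Iic T) T := by
    refine hasDerivWithinAt_Iic_of_tendsto_deriv
      (fun t ht => (hderiv t ht).differentiableAt.differentiableWithinAt) ?_
      (Ioo_mem_nhdsLT haT) (hγ'T.congr' ?_)
    · rw [ContinuousWithinAt, hT]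
      refine (hγT.congr' ?_).mono_left (nhdsWithin_mono _ Ioo_subset_Iio_self)
      exact (piecewise_eqOn (Iio T) γ α).symm.eventuallyEq_of_mem self_mem_nhdsWithin
    · filter_upwards [Ioo_mem_nhdsLT haT] with t ht using (hderiv t ht).deriv.symm
  have hright : HasDerivWithinAt ((Iio T).piecewise γ α) c (Ici T) T :=
    hα.hasDerivWithinAt.congr (fun t ht => piecewise_eq_of_notMem _ _ _ (notMem_Iio.2 ht)) hT
  simpa using hleft.union hright

variable [CompleteSpace E] {Φ : ℝ → E → E} {s : Set ℝ} {T : ℝ}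

lemma exists_eventually_hasDerivAt (hs : s ∈ 𝓝 T)
    (hΦ : ContinuousOn (Function.uncurry Φ) (s ×ˢ univ)) (hlip : LocallyLipschitzSndOn Φ s)
    (p : E) : ∃ α : ℝ → E, α T = p ∧ ∀ᶠ t in 𝓝 T, HasDerivAt α (Φ t (α t)) t := by
  obtain ⟨K, U, hU, hKU⟩ := hlip T (mem_of_mem_nhds hs) p
  rw [nhdsWithin_eq_nhds.2 hs] at hKU
  have hbound : ∀ᶠ q in 𝓝 T ×ˢ 𝓝 p, ‖Φ q.1 q.2‖₊ < ‖Φ T p‖₊ + 1 := by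
    rw [← nhds_prod_eq]
    exact (hΦ.continuousAt (prod_mem_nhds hs univ_mem)).nnnorm.eventually_lt_const (lt_add_one _)
  obtain ⟨S, hS, V, hV, hSV⟩ := mem_prod_iff.1 hbound
  obtain ⟨r, hr, hrUV⟩ := Metric.nhds_basis_closedBall.mem_iff.1 (inter_mem hU hV)
  obtain ⟨δ, hδ, hδS⟩ := Metric.nhds_basis_closedBall.mem_iff.1 (inter_mem (inter_mem hs hS) hKU)
  lift r to ℝ≥0 using hr.le
  set L : ℝ≥0 := ‖Φ T p‖₊ + 1
  have hL : 0 < (L : ℝ) := by positivity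
  set ε : ℝ := min δ (r / L)
  have hε : 0 < ε := lt_min hδ (div_pos hr hL)
  have hεδ : ∀ t ∈ Icc (T - ε) (T + ε), (t ∈ s ∧ t ∈ S) ∧ LipschitzOnWith K (Φ t) U :=
    fun t ht => hδS (Metric.closedBall_subset_closedBall (min_le_left _ _)
      (Real.closedBall_eq_Icc ▸ ht))
  have hpl : IsPicardLindelof (tmin := T - ε) (tmax := T + ε) Φ
      ⟨T, by constructor <;> linarith⟩ p r 0 L K :=
    { lipschitzOnWith := fun t ht => (hεδ t ht).2.mono fun w hw => (hrUV hw).1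
      continuousOn := fun w _ => hΦ.comp (f := fun t => (t, w)) (by fun_prop)
        fun t ht => ⟨(hεδ t ht).1.1, mem_univ w⟩
      norm_le := fun t ht w hw => (hSV (mk_mem_prod (hεδ t ht).1.2 (hrUV hw).2)).le
      mul_max_le := by
        have : L * ε ≤ r := mul_comm (L : ℝ) ε ▸ (le_div_iff₀ hL).1 (min_le_right _ _)
        simpa using this }
  obtain ⟨α, hαT, hα⟩ := hpl.exists_eq_forall_mem_Icc_hasDerivWithinAt₀
  refine ⟨α, hαT, ?_⟩
  filter_upwards [Ioo_mem_nhds (sub_lt_self T hε) (lt_add_of_pos_right T hε)] with t ht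
  exact (hα t (Ioo_subset_Icc_self ht)).hasDerivAt (Icc_mem_nhds ht.1 ht.2)

lemma exists_extension_of_tendsto_nhdsLT {γ : ℝ → E} {a : ℝ} {p : E} (haT : a < T) (hs : s ∈ 𝓝 T)
    (hΦ : ContinuousOn (Function.uncurry Φ) (s ×ˢ univ)) (hlip : LocallyLipschitzSndOn Φ s)
    (hγ : ∀ t ∈ Ico a T, HasDerivAt γ (Φ t (γ t)) t) (hp : Tendsto γ (𝓝[<] T) (𝓝 p)) :
    ∃ T' > T, ∃ η : ℝ → E, (∀ t ∈ Ico a T', HasDerivAt η (Φ t (η t)) t) ∧ EqOn η γ (Iio T) := by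
  obtain ⟨α, rfl, hα⟩ := exists_eventually_hasDerivAt hs hΦ hlip p
  obtain ⟨T', hTT', hαT'⟩ := exists_Ico_subset_of_mem_nhds hα (exists_gt T)
  have hγ'T : Tendsto (fun t => Φ t (γ t)) (𝓝[<] T) (𝓝 (Φ T (α T))) :=
    (hΦ.continuousAt (prod_mem_nhds hs univ_mem)).tendsto.comp
      ((tendsto_id.mono_left nhdsWithin_le_nhds).prodMk_nhds hp)
  refine ⟨T', hTT', (Iio T).piecewise γ α, fun t ht => ?_, piecewise_eqOn _ _ _⟩
  rcases lt_trichotomy t T with htT | rfl | hTt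
  · rw [piecewise_eq_of_mem (Iio T) γ α htT]
    exact (hγ t ⟨ht.1, htT⟩).congr_of_eventuallyEq
      ((piecewise_eqOn (Iio T) γ α).eventuallyEq_of_mem (Iio_mem_nhds htT))
  · rw [piecewise_eq_of_notMem _ _ _ self_notMem_Iio]
    exact hasDerivAt_piecewise_Iio haT hγ hp hγ'T hα.self_of_nhds
  · rw [piecewise_eq_of_notMem _ _ _ (notMem_Iio.2 hTt.le)]
    exact (hαT' ⟨hTt.le, ht.2⟩).congr_of_eventuallyEq
      ((piecewise_eqOn_compl (Iio T) γ α).eventuallyEq_of_mem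
        (mem_of_superset (Ioi_mem_nhds hTt) fun τ hτ => notMem_Iio.2 (le_of_lt hτ)))

end Extension

section Equation

variable {E : Type*} [NormedAddCommGroup E] [NormedSpace ℝ E]

/-- `x`, with derivative `x'`, solves `x'' + f (t, x / t) = 0` at every point of `s`. -/
structure IsSolutionOn (f : ℝ → E → E) (x x' : ℝ → E) (s : Set ℝ) : Prop where
  hasDerivAt : ∀ t ∈ s, HasDerivAt x (x' t) t
  hasDerivAt_deriv : ∀ t ∈ s, HasDerivAt x' (-f t (t⁻¹ • x t)) t

/-- The pair `(u, v) = (t x' - x, x / t)` of new unknowns. -/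
noncomputable def phaseCurve (x x' : ℝ → E) (t : ℝ) : E × E := (t • x' t - x t, t⁻¹ • x t)

/-- The right-hand side of the system `u' = -t f (t, v)`, `v' = u / t ^ 2` satisfied by
`phaseCurve`. -/
noncomputable def phaseField (f : ℝ → E → E) (t : ℝ) (p : E × E) : E × E :=
  (-(t • f t p.2), (t ^ 2)⁻¹ • p.1)

variable {f : ℝ → E → E} {x x' : ℝ → E} {s : Set ℝ} {t : ℝ}

lemma IsSolutionOn.hasDerivAt_phaseCurve_fst (h : IsSolutionOn f x x' s) (ht : t ∈ s) :
    HasDerivAt (fun t => (phaseCurve x x' t).1) (-(t • f t (phaseCurve x x' t).2)) t := by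
  refine (((hasDerivAt_id' t).fun_smul (h.hasDerivAt_deriv t ht)).fun_sub
    (h.hasDerivAt t ht)).congr_deriv ?_
  simp [phaseCurve]

lemma IsSolutionOn.hasDerivAt_phaseCurve_snd (h : IsSolutionOn f x x' s) (ht : t ∈ s)
    (ht₀ : t ≠ 0) :
    HasDerivAt (fun t => (phaseCurve x x' t).2) ((t ^ 2)⁻¹ • (phaseCurve x x' t).1) t := by
  refine ((hasDerivAt_inv ht₀).fun_smul (h.hasDerivAt t ht)).congr_deriv ?_
  simp only [phaseCurve]
  match_scalars <;> field_simp

lemma IsSolutionOn.hasDerivAt_phaseCurve (h : IsSolutionOn f x x' s) (ht : t ∈ s) (ht₀ : t ≠ 0) :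
    HasDerivAt (phaseCurve x x') (phaseField f t (phaseCurve x x' t)) t :=
  (h.hasDerivAt_phaseCurve_fst ht).prodMk (h.hasDerivAt_phaseCurve_snd ht ht₀)

lemma isSolutionOn_of_hasDerivAt_phaseField {η : ℝ → E × E} (hs : 0 ∉ s)
    (hη : ∀ t ∈ s, HasDerivAt η (phaseField f t (η t)) t) :
    IsSolutionOn f (fun t => t • (η t).2) (fun t => t⁻¹ • (η t).1 + (η t).2) s := by
  refine ⟨fun t ht => ?_, fun t ht => ?_⟩ <;> have ht₀ : t ≠ 0 := ne_of_mem_of_not_mem ht hs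
  · refine ((hasDerivAt_id' t).fun_smul (hη t ht).snd).congr_deriv ?_
    simp only [phaseField]
    match_scalars <;> field_simp
  · refine (((hasDerivAt_inv ht₀).fun_smul (hη t ht).fst).fun_add (hη t ht).snd).congr_deriv ?_
    simp only [phaseField, inv_smul_smul₀ ht₀]
    match_scalars <;> field_simp; ring

lemma continuousOn_phaseField (hs : 0 ∉ s) (hf : ContinuousOn (Function.uncurry f) (s ×ˢ univ)) :
    ContinuousOn (Function.uncurry (phaseField f)) (s ×ˢ univ) := by
  have hf' : ContinuousOn (fun q : ℝ × E × E => f q.1 q.2.2) (s ×ˢ univ) :=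
    hf.comp (f := fun q : ℝ × E × E => (q.1, q.2.2)) (by fun_prop) fun q hq => ⟨hq.1, mem_univ _⟩
  refine (continuousOn_fst.smul hf').neg.prodMk
    (((continuousOn_fst.pow 2).inv₀ fun q hq => ?_).smul continuousOn_snd.fst)
  exact pow_ne_zero 2 (ne_of_mem_of_not_mem hq.1 hs)

lemma LocallyLipschitzSndOn.phaseField (hs : 0 ∉ s) (hf : LocallyLipschitzSndOn f s) :
    LocallyLipschitzSndOn (phaseField f) s := by
  intro t ht p
  have ht₀ : t ≠ 0 := ne_of_mem_of_not_mem ht hs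
  obtain ⟨K, U, hU, hKU⟩ := hf t ht p.2
  have hmul : ∀ᶠ τ in 𝓝[s] t, ‖τ‖₊ < ‖t‖₊ + 1 :=
    (tendsto_id.mono_left nhdsWithin_le_nhds).nnnorm.eventually_lt_const (lt_add_one _)
  have hinv : ∀ᶠ τ in 𝓝[s] t, ‖(τ ^ 2)⁻¹‖₊ < ‖(t ^ 2)⁻¹‖₊ + 1 := by
    have : ContinuousAt (fun τ : ℝ => (τ ^ 2)⁻¹) t := by fun_prop (disch := positivity)
    exact (this.mono_left nhdsWithin_le_nhds).nnnorm.eventually_lt_const (lt_add_one _)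
  refine ⟨max ((‖t‖₊ + 1) * K) (‖(t ^ 2)⁻¹‖₊ + 1), Prod.snd ⁻¹' U,
    continuous_snd.continuousAt.preimage_mem_nhds hU, ?_⟩
  filter_upwards [hKU, hmul, hinv] with τ hτ hτ_mul hτ_inv
  have hfst : LipschitzOnWith (‖τ‖₊ * (K * 1)) (fun q : E × E => -(τ • f τ q.2))
      (Prod.snd ⁻¹' U) :=
    ((lipschitzWith_smul τ).comp_lipschitzOnWith
      (hτ.comp LipschitzWith.prod_snd.lipschitzOnWith fun q hq => hq)).neg
  have hsnd : LipschitzWith (‖(τ ^ 2)⁻¹‖₊ * 1) (fun q : E × E => (τ ^ 2)⁻¹ • q.1) :=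
    (lipschitzWith_smul (τ ^ 2)⁻¹).comp LipschitzWith.prod_fst
  rw [mul_one] at hfst hsnd
  exact (hfst.prodMk hsnd.lipschitzOnWith).weaken
    (max_le_max (mul_le_mul_left hτ_mul.le K) hτ_inv.le)

variable [CompleteSpace E]

lemma IsSolutionOn.exists_extension {t₀ T : ℝ} {p : E × E} (ht₀ : 0 < t₀) (hT : t₀ < T)
    (hf : ContinuousOn (Function.uncurry f) (Ici t₀ ×ˢ univ))
    (hlip : LocallyLipschitzSndOn f (Ici t₀)) (h : IsSolutionOn f x x' (Ico t₀ T))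
    (hp : Tendsto (phaseCurve x x') (𝓝[<] T) (𝓝 p)) :
    ∃ T' > T, ∃ y y', IsSolutionOn f y y' (Ico t₀ T') ∧ EqOn y x (Ico t₀ T) := by
  have h0 : (0 : ℝ) ∉ Ici t₀ := notMem_Ici.2 ht₀
  have hγ : ∀ t ∈ Ico t₀ T, HasDerivAt (phaseCurve x x') (phaseField f t (phaseCurve x x' t)) t :=
    fun t ht => h.hasDerivAt_phaseCurve ht (ht₀.trans_le ht.1).ne'
  have hΦ := continuousOn_phaseField h0 hf
  obtain ⟨T', hTT', η, hη, hηx⟩ :=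
    exists_extension_of_tendsto_nhdsLT hT (Ici_mem_nhds hT) hΦ (hlip.phaseField h0) hγ hp
  refine ⟨T', hTT', fun t => t • (η t).2, fun t => t⁻¹ • (η t).1 + (η t).2,
    isSolutionOn_of_hasDerivAt_phaseField (fun hmem => h0 hmem.1) hη, fun t ht => ?_⟩
  change t • (η t).2 = x t
  rw [hηx ht.2]
  exact smul_inv_smul₀ (ht₀.trans_le ht.1).ne' (x t)

end Equation

section Asymptotics

variable {E : Type*} [NormedAddCommGroup E] [NormedSpace ℝ E] {x x' : ℝ → E} {f : ℝ → E → E}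

/-- `x`, with derivative `x'`, is asymptotically linear with asymptote `t ↦ t x₁ + x₂`. -/
structure IsAsymptoticallyLinear (x x' : ℝ → E) (x₁ x₂ : E) : Prop where
  tendsto_sub : Tendsto (fun t => x t - (t • x₁ + x₂)) atTop (𝓝 0)
  isLittleO_deriv_sub : (fun t => x' t - x₁) =o[atTop] fun t => t⁻¹

lemma IsAsymptoticallyLinear.isLittleO_id {x₂ : E} (h : IsAsymptoticallyLinear x x' 0 x₂) :
    x =o[atTop] fun t : ℝ => t := by
  have hlim : Tendsto x atTop (𝓝 x₂) := by simpa using h.tendsto_sub.add_const x₂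
  exact hlim.isBigO_one ℝ |>.trans_isLittleO (isLittleO_const_id_atTop 1)

lemma IsAsymptoticallyLinear.isLittleO_id_or {x₁ x₂ : E} (h : IsAsymptoticallyLinear x x' x₁ x₂) :
    (x =o[atTop] fun t : ℝ => t) ∨
      ∃ x₁ x₂ : E, x₁ ≠ 0 ∧ Tendsto (fun t => x t - (t • x₁ + x₂)) atTop (𝓝 0) := by
  rcases eq_or_ne x₁ 0 with rfl | hx₁
  · exact Or.inl h.isLittleO_id
  · exact Or.inr ⟨x₁, x₂, hx₁, h.tendsto_sub⟩

lemma IsSolutionOn.exists_isAsymptoticallyLinear [CompleteSpace E] {t₀ : ℝ} {U : E}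
    (h : IsSolutionOn f x x' (Ici t₀))
    (hU : Tendsto (fun t => (phaseCurve x x' t).1) atTop (𝓝 U)) :
    ∃ x₁ x₂, IsAsymptoticallyLinear x x' x₁ x₂ := by
  have hz : ∀ᶠ t in atTop, HasDerivAt (fun t => (phaseCurve x x' t).2 + t⁻¹ • U)
      ((t ^ 2)⁻¹ • ((phaseCurve x x' t).1 - U)) t := by
    filter_upwards [eventually_ge_atTop t₀, eventually_gt_atTop 0] with t ht ht₀
    refine ((h.hasDerivAt_phaseCurve_snd ht ht₀.ne').add
      ((hasDerivAt_inv ht₀.ne').smul_const U)).congr_deriv ?_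
    module
  have hr : Tendsto (fun t => (phaseCurve x x' t).1 - U) atTop (𝓝 0) := by
    simpa using hU.sub_const U
  obtain ⟨V, hV⟩ := exists_isLittleO_sub_of_hasDerivAt_inv_sq_smul hz hr
  refine ⟨V, -U, ?_, ?_⟩
  · have hmul : (fun t : ℝ => t * t⁻¹) =ᶠ[atTop] fun _ => (1 : ℝ) := by
      filter_upwards [eventually_ne_atTop 0] with t ht using mul_inv_cancel₀ ht
    refine (isLittleO_one_iff ℝ).1 ((((isBigO_refl (fun t : ℝ => t) atTop).smul_isLittleO
      hV).congr' ?_ hmul))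
    filter_upwards [eventually_ne_atTop 0] with t ht
    simp only [phaseCurve]
    match_scalars <;> field_simp
  · have hlow : (fun t => t⁻¹ • ((phaseCurve x x' t).1 - U)) =o[atTop] fun t => t⁻¹ := by
      simpa using (isBigO_refl (fun t : ℝ => t⁻¹) atTop).smul_isLittleO ((isLittleO_one_iff ℝ).2 hr)
    refine (hlow.add hV).congr' ?_ EventuallyEq.rfl
    filter_upwards [eventually_ne_atTop 0] with t ht
    simp only [phaseCurve]
    match_scalars <;> field_simp <;> ring

end Asymptotics

section Maximal

variable {E : Type*} [NormedAddCommGroup E] [NormedSpace ℝ E] {x x' : ℝ → E} {f : ℝ → E → E}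

/-- The interval `[t₀, T)` whose right endpoint may be `⊤`. -/
def lifespan (t₀ : ℝ) (T : EReal) : Set ℝ := {t | t₀ ≤ t ∧ (t : EReal) < T}

lemma lifespan_coe (t₀ T : ℝ) : lifespan t₀ T = Ico t₀ T := by
  ext; simp [lifespan]

lemma lifespan_top (t₀ : ℝ) : lifespan t₀ ⊤ = Ici t₀ := by
  ext; simp [lifespan]

lemma Icc_subset_lifespan {t₀ t : ℝ} {T : EReal} (ht : t ∈ lifespan t₀ T) :
    Icc t₀ t ⊆ lifespan t₀ T := fun _ hs =>
  ⟨hs.1, (EReal.coe_le_coe_iff.2 hs.2).trans_lt ht.2⟩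

/-- `x`, with derivative `x'`, is a solution on `[t₀, T)` which no solution on a longer interval
`[t₀, T')` extends. -/
structure IsMaximalSolution (f : ℝ → E → E) (x x' : ℝ → E) (t₀ : ℝ) (T : EReal) : Prop where
  isSolutionOn : IsSolutionOn f x x' (lifespan t₀ T)
  not_eqOn : ∀ {y y' : ℝ → E} {T' : EReal}, T < T' → IsSolutionOn f y y' (lifespan t₀ T') →
    ¬ EqOn y x (lifespan t₀ T)

variable {a g : ℝ → ℝ} {t₀ A C W : ℝ} {T : EReal}

lemma norm_neg_smul_le_mul {t : ℝ} {v : E} (ht : 0 ≤ t) (hat : 0 ≤ a t)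
    (hg : MonotoneOn g (Ici 0)) (hfg : ‖f t v‖ ≤ a t * g ‖v‖) (hv : ‖v‖ ≤ W) :
    ‖-(t • f t v)‖ ≤ t * a t * g W := by
  have hgW : g ‖v‖ ≤ g W := hg (norm_nonneg v) ((norm_nonneg v).trans hv) hv
  rw [norm_neg, norm_smul, Real.norm_of_nonneg ht, mul_assoc]
  gcongr
  exact hfg.trans (by gcongr)

lemma IsSolutionOn.norm_phaseCurve_le (ht₀ : 0 < t₀) (h : IsSolutionOn f x x' (lifespan t₀ T))
    (ha : ∀ t ∈ Ici t₀, 0 ≤ a t) (hg : MonotoneOn g (Ici 0))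
    (hfg : ∀ t ∈ Ici t₀, ∀ v, ‖f t v‖ ≤ a t * g ‖v‖)
    (hK : IntegrableOn (fun t => t * a t) (Ici t₀)) (hA : ‖t₀⁻¹ • x t₀‖ ≤ A) (hgA : 0 < g A)
    (hAW : A ≤ W)
    (hW : (‖t₀ • x' t₀ - x t₀‖ / g A + ∫ t in Ici t₀, t * a t) / t₀ < ∫ ξ in A..W, 1 / g ξ)
    {t : ℝ} (ht : t ∈ lifespan t₀ T) :
    ‖(phaseCurve x x' t).1‖ ≤
        (‖t₀ • x' t₀ - x t₀‖ / g A + ∫ t in Ici t₀, t * a t) * g W ∧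
      ‖(phaseCurve x x' t).2‖ ≤ W := by
  have hb : ∀ s ∈ Ici t₀, 0 ≤ s * a s := fun s hs => mul_nonneg (ht₀.le.trans hs) (ha s hs)
  have hIcc : Icc t₀ t ⊆ lifespan t₀ T := Icc_subset_lifespan ht
  refine norm_le_of_div_lt_integral_one_div ht₀ ht.1
    (fun s hs => h.hasDerivAt_phaseCurve_fst (hIcc hs))
    (fun s hs => h.hasDerivAt_phaseCurve_snd (hIcc hs) (ht₀.trans_le hs.1).ne') hA hg hgA
    (fun s hs => hb s hs.1) ?_ (intervalIntegral_le_setIntegral_Ici ht.1 hb hK)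
    (fun s hs => norm_neg_smul_le_mul (ht₀.le.trans hs.1) (ha s hs.1) hg (hfg s hs.1 _) le_rfl)
    hAW hW
  exact (intervalIntegrable_iff_integrableOn_Icc_of_le ht.1).2 (hK.mono_set Icc_subset_Ici_self)

variable [CompleteSpace E]

lemma IsSolutionOn.exists_tendsto_phaseCurve_nhdsLT {T : ℝ} (ht₀ : 0 < t₀) (hT : t₀ < T)
    (h : IsSolutionOn f x x' (Ico t₀ T)) (ha : ∀ t ∈ Ici t₀, 0 ≤ a t) (hg : MonotoneOn g (Ici 0))
    (hfg : ∀ t ∈ Ici t₀, ∀ v, ‖f t v‖ ≤ a t * g ‖v‖)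
    (hK : IntegrableOn (fun t => t * a t) (Ici t₀))
    (hu : ∀ t ∈ Ico t₀ T, ‖(phaseCurve x x' t).1‖ ≤ C)
    (hv : ∀ t ∈ Ico t₀ T, ‖(phaseCurve x x' t).2‖ ≤ W) :
    ∃ p, Tendsto (phaseCurve x x') (𝓝[<] T) (𝓝 p) := by
  obtain ⟨U, hU⟩ := exists_tendsto_nhdsLT_of_norm_deriv_le hT
    (fun t ht => h.hasDerivAt_phaseCurve_fst ht)
    (fun t ht => norm_neg_smul_le_mul (ht₀.le.trans ht.1) (ha t ht.1) hg (hfg t ht.1 _) (hv t ht))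
    ((hK.mono_set Ico_subset_Ici_self).mul_const (g W))
  have hv' : ∀ t ∈ Ico t₀ T, ‖(t ^ 2)⁻¹ • (phaseCurve x x' t).1‖ ≤ (t₀ ^ 2)⁻¹ * C := by
    intro t ht
    rw [norm_smul, Real.norm_of_nonneg (by positivity)]
    gcongr
    exacts [ht.1, hu t ht]
  obtain ⟨V, hV⟩ := exists_tendsto_nhdsLT_of_norm_deriv_le hT
    (fun t ht => h.hasDerivAt_phaseCurve_snd ht (ht₀.trans_le ht.1).ne') hv'
    (integrableOn_const measure_Ico_lt_top.ne)
  exact ⟨(U, V), hU.prodMk_nhds hV⟩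

lemma IsMaximalSolution.eq_top_of_norm_phaseCurve_le (ht₀ : 0 < t₀)
    (hf : ContinuousOn (Function.uncurry f) (Ici t₀ ×ˢ univ))
    (hlip : LocallyLipschitzSndOn f (Ici t₀)) (hT : t₀ < T) (h : IsMaximalSolution f x x' t₀ T)
    (ha : ∀ t ∈ Ici t₀, 0 ≤ a t) (hg : MonotoneOn g (Ici 0))
    (hfg : ∀ t ∈ Ici t₀, ∀ v, ‖f t v‖ ≤ a t * g ‖v‖)
    (hK : IntegrableOn (fun t => t * a t) (Ici t₀))
    (hu : ∀ t ∈ lifespan t₀ T, ‖(phaseCurve x x' t).1‖ ≤ C)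
    (hv : ∀ t ∈ lifespan t₀ T, ‖(phaseCurve x x' t).2‖ ≤ W) : T = ⊤ := by
  by_contra hT_top
  lift T to ℝ using ⟨hT_top, hT.ne_bot⟩
  have hT : t₀ < T := EReal.coe_lt_coe_iff.1 hT
  have hx := h.isSolutionOn
  rw [lifespan_coe] at hx hu hv
  obtain ⟨p, hp⟩ := hx.exists_tendsto_phaseCurve_nhdsLT ht₀ hT ha hg hfg hK hu hv
  obtain ⟨T', hTT', y, y', hy, hyx⟩ := hx.exists_extension ht₀ hT hf hlip hp
  rw [← lifespan_coe] at hy hyx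
  exact h.not_eqOn (EReal.coe_lt_coe_iff.2 hTT') hy hyx

theorem asymptotically_linear_solutions_via_Lyapunov_general (ht₀ : 0 < t₀)
    (hf : ContinuousOn (Function.uncurry f) (Ici t₀ ×ˢ univ))
    (hlip : LocallyLipschitzSndOn f (Ici t₀))
    (ha : ∀ t ∈ Ici t₀, 0 ≤ a t) (hg : MonotoneOn g (Ici 0))
    (hfg : ∀ t ∈ Ici t₀, ∀ v, ‖f t v‖ ≤ a t * g ‖v‖)
    (hK : IntegrableOn (fun t => t * a t) (Ici t₀))
    (hT : t₀ < T) (hx : IsMaximalSolution f x x' t₀ T)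
    (hA : ‖t₀⁻¹ • x t₀‖ ≤ A) (hgA : 0 < g A) (hAW : A ≤ W)
    (hW : (‖t₀ • x' t₀ - x t₀‖ / g A + ∫ t in Ici t₀, t * a t) / t₀ < ∫ ξ in A..W, 1 / g ξ) :
    T = ⊤ ∧ ∃ x₁ x₂, IsAsymptoticallyLinear x x' x₁ x₂ := by
  have hbound : ∀ t ∈ lifespan t₀ T, _ := fun t ht =>
    hx.isSolutionOn.norm_phaseCurve_le ht₀ ha hg hfg hK hA hgA hAW hW ht
  have hT_top : T = ⊤ := hx.eq_top_of_norm_phaseCurve_le ht₀ hf hlip hT ha hg hfg hK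
    (fun t ht => (hbound t ht).1) (fun t ht => (hbound t ht).2)
  subst hT_top
  have hsol : IsSolutionOn f x x' (Ici t₀) := lifespan_top t₀ ▸ hx.isSolutionOn
  rw [lifespan_top] at hbound
  obtain ⟨U, hU⟩ := exists_tendsto_atTop_of_norm_deriv_le
    (fun t ht => hsol.hasDerivAt_phaseCurve_fst ht)
    (fun t ht => norm_neg_smul_le_mul (ht₀.le.trans ht) (ha t ht) hg (hfg t ht _) (hbound t ht).2)
    (hK.mul_const (g W))
  exact ⟨rfl, hsol.exists_isAsymptoticallyLinear hU⟩

end Maximal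

lemma isSolutionOn_iff_exists {f : ℝ → ℝ → ℝ} {x x' : ℝ → ℝ} {s : Set ℝ} :
    IsSolutionOn f x x' s ↔ (∀ t ∈ s, HasDerivAt x (x' t) t) ∧
      ∃ x'' : ℝ → ℝ, (∀ t ∈ s, HasDerivAt x' (x'' t) t) ∧ ∀ t ∈ s, x'' t + f t (x t / t) = 0 := by
  constructor
  · intro h
    refine ⟨h.hasDerivAt, fun t => -f t (x t / t), fun t ht => ?_, fun t _ => neg_add_cancel _⟩
    simpa [div_eq_inv_mul] using h.hasDerivAt_deriv t ht
  · rintro ⟨hx, x'', hx', heq⟩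
    refine ⟨hx, fun t ht => (hx' t ht).congr_deriv ?_⟩
    rw [smul_eq_mul, ← div_eq_inv_mul, eq_neg_of_add_eq_zero_left (heq t ht)]

lemma isMaximalSolution_of_forall {f : ℝ → ℝ → ℝ} {x x' x'' : ℝ → ℝ} {t₀ : ℝ} {T : EReal}
    (hx : ∀ t : ℝ, t₀ ≤ t → t < T → HasDerivAt x (x' t) t)
    (hx' : ∀ t : ℝ, t₀ ≤ t → t < T → HasDerivAt x' (x'' t) t)
    (heq : ∀ t : ℝ, t₀ ≤ t → t < T → x'' t + f t (x t / t) = 0)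
    (hmax : ∀ (y y' y'' : ℝ → ℝ) (T' : EReal), T < T' →
      (∀ t : ℝ, t₀ ≤ t → t < T' → HasDerivAt y (y' t) t) →
      (∀ t : ℝ, t₀ ≤ t → t < T' → HasDerivAt y' (y'' t) t) →
      (∀ t : ℝ, t₀ ≤ t → t < T' → y'' t + f t (y t / t) = 0) →
      ¬ ∀ t : ℝ, t₀ ≤ t → t < T → y t = x t) : IsMaximalSolution f x x' t₀ T where
  isSolutionOn := isSolutionOn_iff_exists.2
    ⟨fun t ht => hx t ht.1 ht.2, x'', fun t ht => hx' t ht.1 ht.2, fun t ht => heq t ht.1 ht.2⟩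
  not_eqOn := fun hTT' hy hyx => by
    obtain ⟨hy, y'', hy', heqy⟩ := isSolutionOn_iff_exists.1 hy
    exact hmax _ _ y'' _ hTT' (fun t h₁ h₂ => hy t ⟨h₁, h₂⟩) (fun t h₁ h₂ => hy' t ⟨h₁, h₂⟩)
      (fun t h₁ h₂ => heqy t ⟨h₁, h₂⟩) fun t h₁ h₂ => hyx ⟨h₁, h₂⟩

lemma abs_div_add_div_le_four_div_mul {t₀ K u α β : ℝ} (ht₀ : 0 < t₀) (hK : 0 ≤ K) (hα : 0 < α)
    (hαβ : α ≤ β) : (|u| / β + K) / t₀ ≤ 4 / t₀ * (K + (1 + u ^ 2 / 2) / α) := by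
  have hu : |u| ≤ 1 + u ^ 2 / 2 := by nlinarith [sq_nonneg (|u| - 1), sq_abs u]
  have hfrac : |u| / β ≤ (1 + u ^ 2 / 2) / α := by gcongr
  have hfrac₀ : 0 ≤ (1 + u ^ 2 / 2) / α := by positivity
  rw [div_mul_eq_mul_div]
  gcongr
  linarith

lemma exists_div_lt_integral_one_div {g : ℝ → ℝ} {t₀ K u A : ℝ} (ht₀ : 0 < t₀) (hK : 0 ≤ K)
    (hg : MonotoneOn g (Ici 1)) (hg₁ : 0 < g 1) (hg_int : IntegrableOn (fun ξ => 1 / g ξ) (Ici 1))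
    (hA : 1 ≤ A) (hu : 4 / t₀ * (K + (1 + u ^ 2 / 2) / g 1) < ∫ ξ in Ici A, 1 / g ξ) :
    ∃ W, A ≤ W ∧ (|u| / g A + K) / t₀ < ∫ ξ in A..W, 1 / g ξ :=
  exists_lt_intervalIntegral_of_lt_integral_Ici (hg_int.mono_set (Ici_subset_Ici.2 hA))
    ((abs_div_add_div_le_four_div_mul ht₀ hK hg₁ (hg self_mem_Ici hA hA)).trans_lt hu)

/-- Theorem 1: consider `x″ + f(t, x/t) = 0`, `t ≥ t₀ ≥ 1`, with `f` continuous,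
`∂f/∂v` continuous, `v·f(t,v) ≤ 0`, `∂f/∂v(t,v) ≤ 0`, `|f(t,v)| ≤ a(t)·g(|v|)` where
`a ≥ 0`, `g ≥ 0` are continuous, `g` positive on `(0,∞)` and nondecreasing,
`K = ∫_{t₀}^{∞} t·a(t) dt < ∞` and `∫_{1}^{∞} dξ/g(ξ) < ∞`.  Then every (maximal, i.e.
non-extendable) solution `x` on `[t₀, T∞)` whose initial data `u₀ = t₀x′(t₀) − x(t₀)`,
`v₀ = x(t₀)/t₀` satisfy `(4/t₀)(K + c/g(1)) < ∫_{1+|v₀|}^{∞} dξ/g(ξ)` with `c = 1 + u₀²/2`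
is defined on all of `[t₀, ∞)` (i.e. `T∞ = ⊤`) and satisfies either `x(t) = o(t)` or
`x(t) = x₁t + x₂ + o(1)` with `x₁ ≠ 0`, as `t → +∞`. -/
theorem asymptotically_linear_solutions_via_Lyapunov
    (t₀ : ℝ) (ht₀ : 1 ≤ t₀) (f fv : ℝ → ℝ → ℝ)
    (hf_cont : ContinuousOn (fun p : ℝ × ℝ => f p.1 p.2) (Set.Ici t₀ ×ˢ Set.univ))
    (hfv : ∀ t ∈ Set.Ici t₀, ∀ v : ℝ, HasDerivAt (f t) (fv t v) v)
    (hfv_cont : ContinuousOn (fun p : ℝ × ℝ => fv p.1 p.2) (Set.Ici t₀ ×ˢ Set.univ))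
    (hsign : ∀ t ∈ Set.Ici t₀, ∀ v : ℝ, v * f t v ≤ 0)
    (hfv_nonpos : ∀ t ∈ Set.Ici t₀, ∀ v : ℝ, fv t v ≤ 0)
    (a g : ℝ → ℝ)
    (ha_cont : ContinuousOn a (Set.Ici t₀))
    (ha_nonneg : ∀ t ∈ Set.Ici t₀, 0 ≤ a t)
    (hg_cont : ContinuousOn g (Set.Ici 0))
    (hg_nonneg : ∀ s ∈ Set.Ici (0 : ℝ), 0 ≤ g s)
    (hg_pos : ∀ s : ℝ, 0 < s → 0 < g s)
    (hg_mono : MonotoneOn g (Set.Ici 0))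
    (hfg : ∀ t ∈ Set.Ici t₀, ∀ v : ℝ, |f t v| ≤ a t * g |v|)
    (hK : IntegrableOn (fun t => t * a t) (Set.Ici t₀))
    (hg_int : IntegrableOn (fun ξ => 1 / g ξ) (Set.Ici (1 : ℝ)))
    (Tinf : EReal) (hT : (t₀ : EReal) < Tinf)
    (x x' x'' : ℝ → ℝ)
    (hx : ∀ t : ℝ, t₀ ≤ t → (t : EReal) < Tinf → HasDerivAt x (x' t) t)
    (hx' : ∀ t : ℝ, t₀ ≤ t → (t : EReal) < Tinf → HasDerivAt x' (x'' t) t)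
    (heq : ∀ t : ℝ, t₀ ≤ t → (t : EReal) < Tinf → x'' t + f t (x t / t) = 0)
    (hmax : ∀ (y y' y'' : ℝ → ℝ) (T' : EReal), Tinf < T' →
      (∀ t : ℝ, t₀ ≤ t → (t : EReal) < T' → HasDerivAt y (y' t) t) →
      (∀ t : ℝ, t₀ ≤ t → (t : EReal) < T' → HasDerivAt y' (y'' t) t) →
      (∀ t : ℝ, t₀ ≤ t → (t : EReal) < T' → y'' t + f t (y t / t) = 0) →
      ¬ (∀ t : ℝ, t₀ ≤ t → (t : EReal) < Tinf → y t = x t))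
    (hinit : 4 / t₀ * ((∫ t in Set.Ici t₀, t * a t) +
        (1 + (t₀ * x' t₀ - x t₀) ^ 2 / 2) / g 1) <
      ∫ ξ in Set.Ici (1 + |x t₀ / t₀|), 1 / g ξ) :
    Tinf = ⊤ ∧
      ((fun t => x t) =o[atTop] (fun t : ℝ => t) ∨
        ∃ x₁ x₂ : ℝ, x₁ ≠ 0 ∧
          Tendsto (fun t => x t - (x₁ * t + x₂)) atTop (nhds 0)) := by
  have ht₀_pos : 0 < t₀ := zero_lt_one.trans_le ht₀
  have hA : 1 ≤ 1 + |x t₀ / t₀| := le_add_of_nonneg_right (abs_nonneg _)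
  have hK_nonneg : 0 ≤ ∫ t in Ici t₀, t * a t := setIntegral_nonneg measurableSet_Ici fun t ht =>
    mul_nonneg (ht₀_pos.le.trans ht) (ha_nonneg t ht)
  obtain ⟨W, hAW, hW⟩ := exists_div_lt_integral_one_div ht₀_pos hK_nonneg
    (hg_mono.mono (Ici_subset_Ici.2 zero_le_one)) (hg_pos 1 one_pos) hg_int hA hinit
  obtain ⟨hT_top, x₁, x₂, hlin⟩ := asymptotically_linear_solutions_via_Lyapunov_general ht₀_pos
    hf_cont (locallyLipschitzSndOn_of_hasDerivAt hfv hfv_cont) ha_nonneg hg_mono hfg hK hT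
    (isMaximalSolution_of_forall hx hx' heq hmax) (by simp [div_eq_inv_mul])
    (hg_pos _ (one_pos.trans_le hA)) hAW hW
  exact ⟨hT_top, by simpa only [smul_eq_mul, mul_comm] using hlin.isLittleO_id_or⟩
end

section
/- Let n ≥ 1 be an integer and consider the Emden–Fowler type equation x″ + A(t)x^{2n−1} = 0 for t ≥ t₀ ≥ 1, where A : [t₀,∞) → ℝ is continuous with A(t) ≤ 0 for all t ≥ t₀ and ∫_{t₀}^{∞} s^{2n}|A(s)| ds < +∞. Then every solution x whose initial data u₀ = t₀x′(t₀) − x(t₀), v₀ = x(t₀)/t₀ satisfy (4/t₀)·(1 + u₀²/2 + ∫_{t₀}^{∞} t^{2n}|A(t)| dt) ≤ (1/(2n))·(1+|v₀|)^{−2n} is defined on all of [t₀,∞) and satisfies either x(t) = o(t) as t → +∞, or x(t) = x₁t + x₂ + o(1) with x₁ ≠ 0 as t → +∞. -/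
open Filter Set Asymptotics MeasureTheory

/-!
Put `u = t x' - x` and `v = x / t`, so that `u' = t x''` and `v' = u / t²`. As long as `|v| < M`,
the forcing satisfies `|t x''| ≤ Mᵐ tᵐ⁺¹ |A t|`; integrating twice bounds `u`, and then `v`, by the
initial data and `Mᵐ ∫ tᵐ⁺¹ |A t|`. When the data are small this bound is strictly below `M`, so
`|v|` never reaches `M`. Hence `x` and `x'` stay bounded on bounded time intervals, and a maximal
solution is global because a bounded solution converges at a finite endpoint and can be restarted
from its limit there. On `[t₀, ∞)` the function `t x''` is now integrable, so `x'` has a limit `p`,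
`u` converges, and `t (x' - p) → 0`; the identity `x - t p = t (x' - p) - u` gives the asymptote.
-/

lemma forall_mem_Icc_lt_of_forall_mem_Ico_lt {α β : Type*} [ConditionallyCompleteLinearOrder α]
    [TopologicalSpace α] [OrderTopology α] [LinearOrder β] [TopologicalSpace β]
    [ClosedIciTopology β] {g : α → β} {a b : α} {c : β} (hg : ContinuousOn g (Icc a b))
    (hstep : ∀ t ∈ Icc a b, (∀ s ∈ Ico a t, g s < c) → g t < c) :
    ∀ t ∈ Icc a b, g t < c := by
  by_contra! ⟨s, hs, hcs⟩
  have hcompact : IsCompact (Icc a b ∩ g ⁻¹' Ici c) :=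
    isCompact_Icc.of_isClosed_subset (hg.preimage_isClosed_of_isClosed isClosed_Icc isClosed_Ici)
      inter_subset_left
  obtain ⟨t, ⟨ht, hct⟩, hleast⟩ := hcompact.exists_isLeast ⟨s, hs, hcs⟩
  refine (hstep t ht fun r hr => ?_).not_ge hct
  by_contra! hcr
  exact hr.2.not_ge (hleast ⟨⟨hr.1, hr.2.le.trans ht.2⟩, hcr⟩)

section Continuation

open Metric Topology NNReal

variable {E : Type*} [NormedAddCommGroup E] {f : ℝ → E → E} {z : ℝ → E} {a T : ℝ}

lemma exists_tendsto_nhdsWithin_Iio_of_norm_deriv_le [NormedSpace ℝ E] [CompleteSpace E]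
    {z' : ℝ → E} {L : ℝ≥0} (haT : a < T) (hz : ∀ t ∈ Ico a T, HasDerivAt z (z' t) t)
    (hL : ∀ t ∈ Ico a T, ‖z' t‖ ≤ L) :
    ∃ p, Tendsto z (𝓝[<] T) (𝓝 p) := by
  have hlip : LipschitzOnWith L z (Ico a T) :=
    (convex_Ico a T).lipschitzOnWith_of_nnnorm_hasDerivWithin_le
      (fun t ht => (hz t ht).hasDerivWithinAt) hL
  have hcauchy : Cauchy (map z (𝓝[<] T)) :=
    (cauchy_nhds.mono nhdsWithin_le_nhds).map_of_le hlip.uniformContinuousOn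
      (le_principal_iff.2 (Ico_mem_nhdsLT haT))
  exact CompleteSpace.complete hcauchy

/-- A time-dependent vector field on `[a, ∞)` to which Picard–Lindelöf applies from every initial
point: continuous in time, and Lipschitz in space on balls, uniformly over compact time intervals.
Balls are centred at the origin, which loses no generality. -/
structure IsLocallyLipschitzField (f : ℝ → E → E) (a : ℝ) : Prop where
  continuousOn : ∀ p, ContinuousOn (f · p) (Ici a)
  exists_lipschitzOnWith : ∀ b R, ∃ K : ℝ≥0, ∀ t ∈ Icc a b, LipschitzOnWith K (f t) (closedBall 0 R)

namespace IsLocallyLipschitzField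

lemma exists_norm_le (hf : IsLocallyLipschitzField f a) (b R : ℝ) :
    ∃ L : ℝ≥0, ∀ t ∈ Icc a b, ∀ p ∈ closedBall 0 R, ‖f t p‖ ≤ L := by
  obtain ⟨C, hC⟩ := isCompact_Icc.exists_bound_of_continuousOn
    ((hf.continuousOn 0).mono (Icc_subset_Ici_self : Icc a b ⊆ Ici a))
  obtain ⟨K, hK⟩ := hf.exists_lipschitzOnWith b R
  refine ⟨(C + K * R).toNNReal, fun t ht p hp => le_trans ?_ (Real.le_coe_toNNReal _)⟩
  have hpR : ‖p‖ ≤ R := mem_closedBall_zero_iff.1 hp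
  have hdiff : ‖f t p - f t 0‖ ≤ K * ‖p‖ := by
    simpa only [sub_zero] using
      (hK t ht).norm_sub_le hp (mem_closedBall_self ((norm_nonneg p).trans hpR))
  calc ‖f t p‖ ≤ ‖f t 0‖ + ‖f t p - f t 0‖ := norm_le_norm_add_norm_sub' _ _
    _ ≤ C + K * R := by gcongr; exacts [hC t ht, hdiff.trans (by gcongr)]

lemma continuousOn_uncurry (hf : IsLocallyLipschitzField f a) (b R : ℝ) :
    ContinuousOn (Function.uncurry f) (Icc a b ×ˢ closedBall 0 R) := by
  obtain ⟨K, hK⟩ := hf.exists_lipschitzOnWith b R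
  exact continuousOn_prod_of_continuousOn_lipschitzOnWith' _ K hK fun p _ =>
    (hf.continuousOn p).mono Icc_subset_Ici_self

lemma tendsto_comp (hf : IsLocallyLipschitzField f a) {p : E} (haT : a < T)
    (hp : Tendsto z (𝓝[<] T) (𝓝 p)) :
    Tendsto (fun t => f t (z t)) (𝓝[<] T) (𝓝 (f T p)) := by
  have hcont := hf.continuousOn_uncurry T (‖p‖ + 1) (T, p)
    ⟨right_mem_Icc.2 haT.le, mem_closedBall_zero_iff.2 (by linarith)⟩
  have hgraph : Tendsto (fun t => (t, z t)) (𝓝[<] T)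
      (𝓝[Icc a T ×ˢ closedBall 0 (‖p‖ + 1)] (T, p)) := by
    refine tendsto_nhdsWithin_iff.2
      ⟨(tendsto_nhdsWithin_of_tendsto_nhds tendsto_id).prodMk_nhds hp, ?_⟩
    filter_upwards [Ico_mem_nhdsLT haT, hp.norm.eventually_le_const (lt_add_one _)] with t ht hzt
    exact ⟨Ico_subset_Icc_self ht, mem_closedBall_zero_iff.2 hzt⟩
  exact hcont.tendsto.comp hgraph

variable [NormedSpace ℝ E] [CompleteSpace E]

lemma exists_hasDerivWithinAt_Icc (hf : IsLocallyLipschitzField f a)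
    (haT : a ≤ T) (p : E) :
    ∃ T' > T, ∃ α : ℝ → E, α T = p ∧
      ∀ t ∈ Icc T T', HasDerivWithinAt α (f t (α t)) (Icc T T') t := by
  obtain ⟨K, hK⟩ := hf.exists_lipschitzOnWith (T + 1) (‖p‖ + 1)
  obtain ⟨L, hL⟩ := hf.exists_norm_le (T + 1) (‖p‖ + 1)
  set ε : ℝ := 1 / (L + 1) with hε
  have hε0 : 0 < ε := by positivity
  have hε1 : ε ≤ 1 := (div_le_one (by positivity)).2 (by simp)
  have hLε : L * ε ≤ 1 := by rw [hε, mul_one_div, div_le_one (by positivity)]; linarith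
  have htime : Icc T (T + ε) ⊆ Icc a (T + 1) := Icc_subset_Icc haT (by linarith)
  have hball : closedBall p 1 ⊆ closedBall 0 (‖p‖ + 1) :=
    closedBall_subset_closedBall' (by rw [dist_zero_right, add_comm])
  have hPL : IsPicardLindelof f (⟨T, le_rfl, by linarith⟩ : Icc T (T + ε)) p 1 0 L K :=
    { lipschitzOnWith := fun t ht => (hK t (htime ht)).mono hball
      continuousOn := fun q _ => (hf.continuousOn q).mono fun t ht => haT.trans ht.1
      norm_le := fun t ht q hq => hL t (htime ht) q (hball hq)
      mul_max_le := by simpa [hε0.le] using hLε }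
  exact ⟨T + ε, by linarith, hPL.exists_eq_forall_mem_Icc_hasDerivWithinAt₀⟩

theorem exists_extension_of_norm_le (hf : IsLocallyLipschitzField f a) {R : ℝ}
    (haT : a < T) (hz : ∀ t ∈ Ico a T, HasDerivAt z (f t (z t)) t)
    (hR : ∀ t ∈ Ico a T, ‖z t‖ ≤ R) :
    ∃ T' > T, ∃ w : ℝ → E, (∀ t ∈ Ico a T', HasDerivAt w (f t (w t)) t) ∧ EqOn w z (Iio T) := by
  obtain ⟨L, hL⟩ := hf.exists_norm_le T R
  obtain ⟨p, hp⟩ := exists_tendsto_nhdsWithin_Iio_of_norm_deriv_le haT hz fun t ht =>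
    hL t (Ico_subset_Icc_self ht) _ (mem_closedBall_zero_iff.2 (hR t ht))
  obtain ⟨T', hTT', α, rfl, hα⟩ := hf.exists_hasDerivWithinAt_Icc haT.le p
  set w : ℝ → E := fun t => if t < T then z t else α t
  have hwz : EqOn w z (Iio T) := fun t ht => if_pos ht
  have hwα : EqOn w α (Ici T) := fun t ht => if_neg (not_lt.2 ht)
  have hw_left : ∀ t ∈ Ico a T, HasDerivAt w (f t (w t)) t := fun t ht => by
    rw [hwz ht.2]
    exact (hz t ht).congr_of_eventuallyEq (hwz.eventuallyEq_of_mem (Iio_mem_nhds ht.2))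
  refine ⟨T', hTT', w, fun t ht => ?_, hwz⟩
  rcases lt_trichotomy t T with htT | rfl | hTt
  · exact hw_left t ⟨ht.1, htT⟩
  · have hw_lim : Tendsto w (𝓝[<] t) (𝓝 (w t)) := by
      rw [hwα self_mem_Ici]
      exact hp.congr' (hwz.symm.eventuallyEq_of_mem self_mem_nhdsWithin)
    have hderiv_left : HasDerivWithinAt w (f t (w t)) (Iic t) t :=
      hasDerivWithinAt_Iic_of_tendsto_deriv (s := Ico a t)
        (fun s hs => (hw_left s hs).differentiableAt.differentiableWithinAt)
        (hw_lim.mono_left (nhdsWithin_mono _ Ico_subset_Iio_self)) (Ico_mem_nhdsLT haT)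
        ((hf.tendsto_comp haT hw_lim).congr'
          (eventually_of_mem (Ico_mem_nhdsLT haT) fun s hs => (hw_left s hs).deriv.symm))
    have hderiv_right : HasDerivWithinAt w (f t (w t)) (Ici t) t := by
      rw [hwα self_mem_Ici]
      exact ((hα t (left_mem_Icc.2 hTT'.le)).mono_of_mem_nhdsWithin (Icc_mem_nhdsGE hTT')).congr
        hwα (hwα self_mem_Ici)
    simpa only [Iic_union_Ici, hasDerivWithinAt_univ] using hderiv_left.union hderiv_right
  · rw [hwα hTt.le]
    exact ((hα t ⟨hTt.le, ht.2.le⟩).hasDerivAt (Icc_mem_nhds hTt ht.2)).congr_of_eventuallyEq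
      (hwα.eventuallyEq_of_mem (Ici_mem_nhds hTt))

end IsLocallyLipschitzField

end Continuation

section Growth

variable {E : Type*} [NormedAddCommGroup E] [NormedSpace ℝ E] {x x' x'' : ℝ → E} {B : ℝ → ℝ}
  {a b K M t : ℝ}

lemma hasDerivAt_smul_deriv_sub (hx : HasDerivAt x (x' t) t) (hx' : HasDerivAt x' (x'' t) t) :
    HasDerivAt (fun s => s • x' s - x s) (t • x'' t) t := by
  simpa only [one_smul, add_sub_cancel_right] using! ((hasDerivAt_id t).smul hx').sub hx

lemma hasDerivAt_inv_smul (ht : t ≠ 0) (hx : HasDerivAt x (x' t) t) :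
    HasDerivAt (fun s => s⁻¹ • x s) ((t ^ 2)⁻¹ • (t • x' t - x t)) t := by
  convert! (hasDerivAt_inv ht).smul hx using 1
  have : (t ^ 2)⁻¹ * t = t⁻¹ := by field_simp
  rw [smul_sub, smul_smul, this, neg_smul, sub_eq_add_neg]

lemma norm_sub_le_setIntegral_Ici {y y' : ℝ → E} (hab : a ≤ b)
    (hy : ∀ t ∈ Icc a b, HasDerivAt y (y' t) t) (hB : IntegrableOn B (Ici a))
    (hB0 : ∀ t ∈ Ici a, 0 ≤ B t) (hyB : ∀ t ∈ Ico a b, ‖y' t‖ ≤ B t) :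
    ‖y b - y a‖ ≤ ∫ t in Ici a, B t := by
  have hyB' : ∀ t ∈ Ioo a b, ‖deriv y t‖ ≤ B t := fun t ht => by
    rw [(hy t (Ioo_subset_Icc_self ht)).deriv]; exact hyB t (Ioo_subset_Ico_self ht)
  calc ‖y b - y a‖ ≤ ∫ t in a..b, B t :=
        norm_sub_le_integral_of_norm_deriv_le_of_le hab
          (fun t ht => (hy t ht).continuousAt.continuousWithinAt)
          (fun t ht =>
            (hy t (Ioo_subset_Icc_self ht)).differentiableAt.differentiableWithinAt)
          (ae_of_all _ hyB')
          ((intervalIntegrable_iff_integrableOn_Icc_of_le hab).2 (hB.mono_set Icc_subset_Ici_self))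
    _ = ∫ t in Ioc a b, B t := intervalIntegral.integral_of_le hab
    _ ≤ ∫ t in Ici a, B t := setIntegral_mono_set hB
        ((ae_restrict_mem measurableSet_Ici).mono hB0)
        (Ioc_subset_Icc_self.trans Icc_subset_Ici_self).eventuallyLE

lemma norm_smul_deriv_sub_le (hab : a ≤ b) (hx : ∀ t ∈ Icc a b, HasDerivAt x (x' t) t)
    (hx' : ∀ t ∈ Icc a b, HasDerivAt x' (x'' t) t) (hB : IntegrableOn B (Ici a))
    (hB0 : ∀ t ∈ Ici a, 0 ≤ B t) (hxB : ∀ t ∈ Ico a b, ‖t • x'' t‖ ≤ B t) :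
    ‖b • x' b - x b‖ ≤ ‖a • x' a - x a‖ + ∫ t in Ici a, B t := by
  have := norm_sub_le_setIntegral_Ici (y := fun t => t • x' t - x t) hab
    (fun t ht => hasDerivAt_smul_deriv_sub (hx t ht) (hx' t ht)) hB hB0 hxB
  exact (norm_le_norm_add_norm_sub' _ _).trans (by gcongr)

lemma norm_div_le_of_norm_smul_deriv_sub_le (ha : 0 < a) (hab : a ≤ b)
    (hx : ∀ t ∈ Icc a b, HasDerivAt x (x' t) t) (hK : ∀ t ∈ Ico a b, ‖t • x' t - x t‖ ≤ K)
    (hK0 : 0 ≤ K) : ‖x b‖ / b ≤ (‖x a‖ + K) / a := by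
  have hpos : ∀ t ∈ Icc a b, 0 < t := fun t ht => ha.trans_le ht.1
  have hv : ∀ t ∈ Icc a b, HasDerivAt (fun s => s⁻¹ • x s) ((t ^ 2)⁻¹ • (t • x' t - x t)) t :=
    fun t ht => hasDerivAt_inv_smul (hpos t ht).ne' (hx t ht)
  have hβ : ∀ t ∈ Icc a b, HasDerivAt (fun s => (‖x a‖ + K) / a - K * s⁻¹) (K * (t ^ 2)⁻¹) t :=
    fun t ht => by
      simpa only [mul_neg, neg_neg] using
        ((hasDerivAt_inv (hpos t ht).ne').const_mul K).const_sub ((‖x a‖ + K) / a)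
  have hnorm : ∀ t ∈ Icc a b, ‖t⁻¹ • x t‖ = ‖x t‖ / t := fun t ht => by
    rw [norm_smul, norm_inv, Real.norm_of_nonneg (hpos t ht).le, inv_mul_eq_div]
  have hfence := image_norm_le_of_norm_deriv_right_le_deriv_boundary'
    (fun t ht => (hv t ht).continuousAt.continuousWithinAt)
    (fun t ht => (hv t (Ico_subset_Icc_self ht)).hasDerivWithinAt)
    (by rw [hnorm a (left_mem_Icc.2 hab)]; exact le_of_eq (by ring))
    (fun t ht => (hβ t ht).continuousAt.continuousWithinAt)
    (fun t ht => (hβ t (Ico_subset_Icc_self ht)).hasDerivWithinAt)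
    (fun t ht => by
      rw [norm_smul, norm_inv, norm_pow, Real.norm_eq_abs, sq_abs, mul_comm]
      gcongr
      exact hK t ht) (right_mem_Icc.2 hab)
  rw [hnorm b (right_mem_Icc.2 hab)] at hfence
  have hb : 0 < b := hpos b (right_mem_Icc.2 hab)
  exact hfence.trans (sub_le_self _ (by positivity))

theorem norm_div_lt_of_norm_smul_le (ha : 0 < a)
    (hx : ∀ t ∈ Icc a b, HasDerivAt x (x' t) t) (hx' : ∀ t ∈ Icc a b, HasDerivAt x' (x'' t) t)
    (hB : IntegrableOn B (Ici a)) (hB0 : ∀ t ∈ Ici a, 0 ≤ B t)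
    (hxB : ∀ t ∈ Icc a b, ‖x t‖ / t < M → ‖t • x'' t‖ ≤ B t)
    (hM : ‖x a‖ + ‖a • x' a - x a‖ + ∫ t in Ici a, B t < M * a) :
    ∀ t ∈ Icc a b, ‖x t‖ / t < M := by
  refine forall_mem_Icc_lt_of_forall_mem_Ico_lt
    (fun t ht => ((hx t ht).continuousAt.norm.div continuousAt_id
      (ha.trans_le ht.1).ne').continuousWithinAt) fun t ht hlt => ?_
  have hsub : Icc a t ⊆ Icc a b := Icc_subset_Icc_right ht.2
  have hu : ∀ s ∈ Ico a t, ‖s • x' s - x s‖ ≤ ‖a • x' a - x a‖ + ∫ r in Ici a, B r := fun s hs =>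
    have hst : Icc a s ⊆ Icc a b := (Icc_subset_Icc_right hs.2.le).trans hsub
    norm_smul_deriv_sub_le hs.1 (fun r hr => hx r (hst hr)) (fun r hr => hx' r (hst hr)) hB hB0
      fun r hr => hxB r (hst (Ico_subset_Icc_self hr)) (hlt r ⟨hr.1, hr.2.trans hs.2⟩)
  have hI0 : 0 ≤ ∫ t in Ici a, B t := setIntegral_nonneg measurableSet_Ici hB0
  calc ‖x t‖ / t ≤ (‖x a‖ + (‖a • x' a - x a‖ + ∫ r in Ici a, B r)) / a :=
        norm_div_le_of_norm_smul_deriv_sub_le ha ht.1 (fun s hs => hx s (hsub hs)) hu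
          (by positivity)
    _ < M := by rwa [div_lt_iff₀ ha, ← add_assoc]

end Growth

section Asymptotic

open Topology

variable {E : Type*} [NormedAddCommGroup E] [NormedSpace ℝ E] {x x' x'' : ℝ → E} {a : ℝ}

/-- `x`, with derivative `x'`, is asymptotically linear: `x(t) = x₁t + x₂ + o(1)` and
`x'(t) = x₁ + o(t⁻¹)` as `t → ∞`. -/
def IsAsymptoticallyLinear_s6 (x x' : ℝ → E) : Prop :=
  ∃ x₁ x₂ : E, Tendsto (fun t => x t - (t • x₁ + x₂)) atTop (𝓝 0) ∧
    (fun t => x' t - x₁) =o[atTop] fun t => t⁻¹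

lemma IsAsymptoticallyLinear_s6.isLittleO_or_exists_ne_zero (hx : IsAsymptoticallyLinear_s6 x x') :
    x =o[atTop] (fun t : ℝ => t) ∨
      ∃ x₁ x₂ : E, x₁ ≠ 0 ∧ Tendsto (fun t => x t - (t • x₁ + x₂)) atTop (𝓝 0) := by
  obtain ⟨x₁, x₂, hlim, -⟩ := hx
  refine or_iff_not_imp_right.2 fun hne => ?_
  obtain rfl : x₁ = 0 := by
    by_contra h
    exact hne ⟨x₁, x₂, h, hlim⟩
  have hlim' : Tendsto x atTop (𝓝 x₂) :=
    tendsto_sub_nhds_zero_iff.1 (by simpa only [smul_zero, zero_add] using hlim)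
  exact (hlim'.isBigO_one ℝ).trans_isLittleO (isLittleO_const_id_atTop 1)

lemma integrableOn_Ioi_of_integrableOn_Ioi_smul (ha : 0 < a)
    (hint : IntegrableOn (fun t => t • x'' t) (Ioi a)) : IntegrableOn x'' (Ioi a) := by
  refine IntegrableOn.congr_fun (f := fun t => t⁻¹ • t • x'' t) ?_
    (fun t ht => inv_smul_smul₀ (ha.trans ht).ne' _) measurableSet_Ioi
  refine hint.bdd_smul a⁻¹ measurable_inv.aestronglyMeasurable ?_
  filter_upwards [ae_restrict_mem measurableSet_Ioi] with t ht
  rw [norm_inv, Real.norm_of_nonneg (ha.trans ht).le]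
  exact inv_anti₀ ha (le_of_lt ht)

lemma norm_smul_sub_le_integral_Ioi [CompleteSpace E] {p : E} (ha : 0 < a)
    (hx' : ∀ t ∈ Ici a, HasDerivAt x' (x'' t) t)
    (hint : IntegrableOn (fun t => t • x'' t) (Ioi a)) (hp : Tendsto x' atTop (𝓝 p)) :
    ‖a • (x' a - p)‖ ≤ ∫ s in Ioi a, ‖s • x'' s‖ := by
  have hx''int := integrableOn_Ioi_of_integrableOn_Ioi_smul ha hint
  calc ‖a • (x' a - p)‖ = ‖∫ s in Ioi a, a • x'' s‖ := by
        rw [integral_smul, integral_Ioi_of_hasDerivAt_of_tendsto' hx' hx''int hp, norm_smul,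
          norm_smul, norm_sub_rev]
    _ ≤ ∫ s in Ioi a, ‖a • x'' s‖ := norm_integral_le_integral_norm _
    _ ≤ ∫ s in Ioi a, ‖s • x'' s‖ := by
        refine setIntegral_mono_on (hx''int.smul a).norm hint.norm measurableSet_Ioi fun s hs => ?_
        rw [norm_smul, norm_smul]
        gcongr
        exact abs_le_abs_of_nonneg ha.le (le_of_lt hs)

theorem isAsymptoticallyLinear_of_integrableOn_smul [CompleteSpace E] (ha : 0 < a)
    (hx : ∀ t ∈ Ici a, HasDerivAt x (x' t) t) (hx' : ∀ t ∈ Ici a, HasDerivAt x' (x'' t) t)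
    (hint : IntegrableOn (fun t => t • x'' t) (Ioi a)) : IsAsymptoticallyLinear_s6 x x' := by
  obtain ⟨q, hq⟩ : ∃ q, Tendsto (fun t => t • x' t - x t) atTop (𝓝 q) :=
    ⟨_, tendsto_limUnder_of_hasDerivAt_of_integrableOn_Ioi
      (fun t ht => hasDerivAt_smul_deriv_sub (hx t (Ioi_subset_Ici_self ht))
        (hx' t (Ioi_subset_Ici_self ht))) hint⟩
  obtain ⟨p, hp⟩ : ∃ p, Tendsto x' atTop (𝓝 p) :=
    ⟨_, tendsto_limUnder_of_hasDerivAt_of_integrableOn_Ioi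
      (fun t ht => hx' t (Ioi_subset_Ici_self ht))
      (integrableOn_Ioi_of_integrableOn_Ioi_smul ha hint)⟩
  have hslope : Tendsto (fun t => t • (x' t - p)) atTop (𝓝 0) := by
    refine squeeze_zero_norm' ?_
      (tendsto_integral_Ioi_zero (f := fun s => ‖s • x'' s‖) (μ := volume) tendsto_id)
    filter_upwards [eventually_ge_atTop a] with t hat
    exact norm_smul_sub_le_integral_Ioi (ha.trans_le hat)
      (fun s hs => hx' s (hat.trans hs)) (hint.mono_set (Ioi_subset_Ioi hat)) hp
  refine ⟨p, -q, ?_, ?_⟩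
  · have hdiff := (hslope.sub hq).add_const q
    rw [zero_sub, neg_add_cancel] at hdiff
    refine hdiff.congr fun t => ?_
    rw [smul_sub]
    abel
  · have hsmall := (isBigO_refl (fun t : ℝ => t⁻¹) atTop).smul_isLittleO
      ((isLittleO_one_iff ℝ).2 hslope)
    refine hsmall.congr' ?_ (.of_forall fun t => by simp only [smul_eq_mul, mul_one])
    filter_upwards [eventually_ne_atTop 0] with t ht
    exact inv_smul_smul₀ ht _

end Asymptotic

section EmdenFowler

open Metric NNReal

variable {A : ℝ → ℝ} {m : ℕ} {x x' : ℝ → ℝ} {s : Set ℝ} {a b M R T t : ℝ}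

/-- `x`, with derivative `x'`, solves the Emden–Fowler equation `x″ + A(t)xᵐ = 0` on `s`. -/
structure IsEmdenFowlerSolutionOn (A : ℝ → ℝ) (m : ℕ) (x x' : ℝ → ℝ) (s : Set ℝ) : Prop where
  hasDerivAt : ∀ t ∈ s, HasDerivAt x (x' t) t
  hasDerivAt_deriv : ∀ t ∈ s, HasDerivAt x' (-(A t * x t ^ m)) t

/-- The vector field on the phase plane of `(x, x')` whose integral curves are the solutions of
`x″ + A(t)xᵐ = 0`. -/
def emdenFowlerField (A : ℝ → ℝ) (m : ℕ) (t : ℝ) (p : ℝ × ℝ) : ℝ × ℝ :=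
  (p.2, -(A t * p.1 ^ m))

lemma isEmdenFowlerSolutionOn_fst_snd_iff {w : ℝ → ℝ × ℝ} :
    IsEmdenFowlerSolutionOn A m (fun t => (w t).1) (fun t => (w t).2) s ↔
      ∀ t ∈ s, HasDerivAt w (emdenFowlerField A m t (w t)) t :=
  ⟨fun h t ht => (h.hasDerivAt t ht).prodMk (h.hasDerivAt_deriv t ht),
    fun h => ⟨fun t ht => (h t ht).fst, fun t ht => (h t ht).snd⟩⟩

lemma lipschitzOnWith_pow_closedBall (m : ℕ) (R : ℝ) :
    LipschitzOnWith (m * R ^ (m - 1)).toNNReal (fun x : ℝ => x ^ m) (closedBall 0 R) := by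
  refine LipschitzOnWith.of_dist_le' fun x hx y hy => ?_
  rw [mem_closedBall_zero_iff, Real.norm_eq_abs] at hx hy
  calc |x ^ m - y ^ m| ≤ |x - y| * m * max |x| |y| ^ (m - 1) := abs_pow_sub_pow_le x y m
    _ ≤ |x - y| * m * R ^ (m - 1) := by gcongr; exact max_le hx hy
    _ = m * R ^ (m - 1) * dist x y := by rw [Real.dist_eq]; ring

lemma isLocallyLipschitzField_emdenFowlerField (hA : ContinuousOn A (Ici a)) (m : ℕ) :
    IsLocallyLipschitzField (emdenFowlerField A m) a where
  continuousOn p := continuousOn_const.prodMk (hA.mul continuousOn_const).neg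
  exists_lipschitzOnWith b R := by
    obtain ⟨C, hC⟩ := isCompact_Icc.exists_bound_of_continuousOn
      (hA.mono (Icc_subset_Ici_self : Icc a b ⊆ Ici a))
    set K : ℝ≥0 := (m * R ^ (m - 1)).toNNReal
    refine ⟨max 1 (C.toNNReal * K), fun t ht => ?_⟩
    have hAt : ‖-A t‖₊ ≤ C.toNNReal := by
      rw [nnnorm_neg, ← norm_toNNReal]
      exact Real.toNNReal_le_toNNReal (hC t ht)
    have hpow : LipschitzOnWith K (fun p : ℝ × ℝ => p.1 ^ m) (closedBall 0 R) := by
      simpa only [mul_one, Function.comp_def] using (lipschitzOnWith_pow_closedBall m R).comp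
        LipschitzWith.prod_fst.lipschitzOnWith fun p hp =>
          mem_closedBall_zero_iff.2 ((norm_fst_le p).trans (mem_closedBall_zero_iff.1 hp))
    have hforce : LipschitzOnWith (C.toNNReal * K) (fun p : ℝ × ℝ => -(A t * p.1 ^ m))
        (closedBall 0 R) := by
      simpa only [Function.comp_def, smul_eq_mul, neg_mul] using
        (((lipschitzWith_smul (-A t)).weaken hAt).comp_lipschitzOnWith hpow)
    exact LipschitzWith.prod_snd.lipschitzOnWith.prodMk hforce

namespace IsEmdenFowlerSolutionOn

lemma mono {s' : Set ℝ} (hsol : IsEmdenFowlerSolutionOn A m x x' s) (hs : s' ⊆ s) :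
    IsEmdenFowlerSolutionOn A m x x' s' :=
  ⟨fun t ht => hsol.hasDerivAt t (hs ht), fun t ht => hsol.hasDerivAt_deriv t (hs ht)⟩

theorem exists_extension (hA : ContinuousOn A (Ici a)) (haT : a < T)
    (hsol : IsEmdenFowlerSolutionOn A m x x' (Ico a T)) (hx : ∀ t ∈ Ico a T, |x t| ≤ R)
    (hx' : ∀ t ∈ Ico a T, |x' t| ≤ R) :
    ∃ T' > T, ∃ y y' : ℝ → ℝ, IsEmdenFowlerSolutionOn A m y y' (Ico a T') ∧
      EqOn y x (Iio T) := by
  obtain ⟨T', hTT', w, hw, hwx⟩ :=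
    (isLocallyLipschitzField_emdenFowlerField hA m).exists_extension_of_norm_le
      (z := fun t => (x t, x' t)) haT (isEmdenFowlerSolutionOn_fst_snd_iff.1 hsol)
      fun t ht => norm_prod_le_iff.2 ⟨hx t ht, hx' t ht⟩
  exact ⟨T', hTT', _, _, isEmdenFowlerSolutionOn_fst_snd_iff.2 hw,
    fun t ht => congrArg Prod.fst (hwx ht)⟩

end IsEmdenFowlerSolutionOn

lemma abs_smul_forcing_le (ht : 0 < t) (hx : |x t| ≤ M * t) :
    ‖t • -(A t * x t ^ m)‖ ≤ M ^ m * (t ^ (m + 1) * |A t|) := by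
  rw [norm_smul, norm_neg, norm_mul, norm_pow, Real.norm_of_nonneg ht.le, Real.norm_eq_abs,
    Real.norm_eq_abs]
  calc t * (|A t| * |x t| ^ m) ≤ t * (|A t| * (M * t) ^ m) := by gcongr
    _ = M ^ m * (t ^ (m + 1) * |A t|) := by ring

namespace IsEmdenFowlerSolutionOn

theorem abs_le_and_abs_deriv_le (ha : 0 < a) (hab : a ≤ b) (hM0 : 0 ≤ M)
    (hA_int : IntegrableOn (fun t => t ^ (m + 1) * |A t|) (Ici a))
    (hM : |x a| + |a * x' a - x a| + M ^ m * ∫ t in Ici a, t ^ (m + 1) * |A t| < M * a)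
    (hsol : IsEmdenFowlerSolutionOn A m x x' (Icc a b)) :
    |x b| ≤ M * b ∧ |x' b| ≤ 2 * M := by
  have hpos : ∀ t ∈ Ici a, 0 < t := fun t ht => ha.trans_le ht
  have hB : IntegrableOn (fun t => M ^ m * (t ^ (m + 1) * |A t|)) (Ici a) := hA_int.const_mul _
  have hB0 : ∀ t ∈ Ici a, 0 ≤ M ^ m * (t ^ (m + 1) * |A t|) := fun t ht => by
    have := hpos t ht
    positivity
  rw [← integral_const_mul] at hM
  have hv : ∀ t ∈ Icc a b, |x t| / t < M :=
    norm_div_lt_of_norm_smul_le ha hsol.hasDerivAt hsol.hasDerivAt_deriv hB hB0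
      (fun t ht hlt => abs_smul_forcing_le (hpos t ht.1)
        ((div_le_iff₀ (hpos t ht.1)).1 hlt.le)) hM
  have hx : ∀ t ∈ Icc a b, |x t| ≤ M * t := fun t ht =>
    (div_le_iff₀ (hpos t ht.1)).1 (hv t ht).le
  have hu : |b * x' b - x b| ≤ M * b := by
    have := norm_smul_deriv_sub_le hab hsol.hasDerivAt hsol.hasDerivAt_deriv hB hB0
      fun t ht => abs_smul_forcing_le (hpos t ht.1) (hx t (Ico_subset_Icc_self ht))
    simp only [smul_eq_mul, Real.norm_eq_abs] at this
    have : M * a ≤ M * b := by gcongr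
    linarith [abs_nonneg (x a)]
  have hb : 0 < b := hpos b hab
  have hxb := hx b (right_mem_Icc.2 hab)
  refine ⟨hxb, le_of_mul_le_mul_left ?_ hb⟩
  calc b * |x' b| = |(b * x' b - x b) + x b| := by rw [sub_add_cancel, abs_mul, abs_of_pos hb]
    _ ≤ |b * x' b - x b| + |x b| := abs_add_le _ _
    _ ≤ b * (2 * M) := by linarith

theorem isAsymptoticallyLinear (ha : 0 < a) (hA : ContinuousOn A (Ici a))
    (hA_int : IntegrableOn (fun t => t ^ (m + 1) * |A t|) (Ici a))
    (hsol : IsEmdenFowlerSolutionOn A m x x' (Ici a)) (hx : ∀ t ∈ Ici a, |x t| ≤ M * t) :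
    IsAsymptoticallyLinear_s6 x x' := by
  have hx_cont : ContinuousOn x (Ici a) := fun t ht =>
    (hsol.hasDerivAt t ht).continuousAt.continuousWithinAt
  refine isAsymptoticallyLinear_of_integrableOn_smul ha hsol.hasDerivAt hsol.hasDerivAt_deriv ?_
  refine IntegrableOn.mono_set (.mono' (hA_int.const_mul (M ^ m)) ?_ ?_) Ioi_subset_Ici_self
  · exact (continuousOn_id.smul (hA.mul (hx_cont.pow m)).neg).aestronglyMeasurable
      measurableSet_Ici
  · filter_upwards [ae_restrict_mem measurableSet_Ici] with t ht
    exact abs_smul_forcing_le (ha.trans_le ht) (hx t ht)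

end IsEmdenFowlerSolutionOn

/-- `x`, with derivative `x'`, solves `x″ + A(t)xᵐ = 0` on `[t₀, T)`, where `T = ∞` is allowed, and
is not the restriction of a solution on any longer interval `[t₀, T')`. -/
structure IsMaximalEmdenFowlerSolution (A : ℝ → ℝ) (m : ℕ) (x x' : ℝ → ℝ) (t₀ : ℝ) (T : EReal) :
    Prop where
  isSolutionOn : IsEmdenFowlerSolutionOn A m x x' {t | t₀ ≤ t ∧ (t : EReal) < T}
  not_extendable : ∀ (y y' : ℝ → ℝ) (T' : EReal), T < T' →
    IsEmdenFowlerSolutionOn A m y y' {t | t₀ ≤ t ∧ (t : EReal) < T'} →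
      ¬ EqOn y x {t | t₀ ≤ t ∧ (t : EReal) < T}

lemma isMaximalEmdenFowlerSolution_of_add_eq_zero {t₀ : ℝ} {T : EReal} {x'' : ℝ → ℝ}
    (hx : ∀ t : ℝ, t₀ ≤ t → (t : EReal) < T → HasDerivAt x (x' t) t)
    (hx' : ∀ t : ℝ, t₀ ≤ t → (t : EReal) < T → HasDerivAt x' (x'' t) t)
    (heq : ∀ t : ℝ, t₀ ≤ t → (t : EReal) < T → x'' t + A t * x t ^ m = 0)
    (hmax : ∀ (y y' y'' : ℝ → ℝ) (T' : EReal), T < T' →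
      (∀ t : ℝ, t₀ ≤ t → (t : EReal) < T' → HasDerivAt y (y' t) t) →
      (∀ t : ℝ, t₀ ≤ t → (t : EReal) < T' → HasDerivAt y' (y'' t) t) →
      (∀ t : ℝ, t₀ ≤ t → (t : EReal) < T' → y'' t + A t * y t ^ m = 0) →
      ¬ (∀ t : ℝ, t₀ ≤ t → (t : EReal) < T → y t = x t)) :
    IsMaximalEmdenFowlerSolution A m x x' t₀ T where
  isSolutionOn :=
    { hasDerivAt := fun t ht => hx t ht.1 ht.2
      hasDerivAt_deriv := fun t ht => (hx' t ht.1 ht.2).congr_deriv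
        (eq_neg_of_add_eq_zero_left (heq t ht.1 ht.2)) }
  not_extendable y y' T' hT' hy hyx :=
    hmax y y' (fun t => -(A t * y t ^ m)) T' hT' (fun t h₁ h₂ => hy.hasDerivAt t ⟨h₁, h₂⟩)
      (fun t h₁ h₂ => hy.hasDerivAt_deriv t ⟨h₁, h₂⟩) (fun _ _ _ => neg_add_cancel _)
      fun _ h₁ h₂ => hyx ⟨h₁, h₂⟩

theorem IsMaximalEmdenFowlerSolution.eq_top_of_forall_bounded {t₀ : ℝ} {T : EReal}
    (hmax : IsMaximalEmdenFowlerSolution A m x x' t₀ T) (hA : ContinuousOn A (Ici t₀))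
    (hT : (t₀ : EReal) < T)
    (hbdd : ∀ b : ℝ, ∃ R, ∀ t ∈ Icc t₀ b, (t : EReal) < T → |x t| ≤ R ∧ |x' t| ≤ R) :
    T = ⊤ := by
  induction T with
  | bot => exact absurd hT not_lt_bot
  | top => rfl
  | coe T =>
    obtain ⟨R, hR⟩ := hbdd T
    have hdom (b : ℝ) : {t : ℝ | t₀ ≤ t ∧ (t : EReal) < b} = Ico t₀ b := by
      simp only [EReal.coe_lt_coe_iff, Ico_def]
    have hR' : ∀ t ∈ Ico t₀ T, |x t| ≤ R ∧ |x' t| ≤ R := fun t ht =>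
      hR t (Ico_subset_Icc_self ht) (EReal.coe_lt_coe_iff.2 ht.2)
    obtain ⟨T', hTT', y, y', hy, hyx⟩ :=
      (hdom T ▸ hmax.isSolutionOn).exists_extension hA (EReal.coe_lt_coe_iff.1 hT)
        (fun t ht => (hR' t ht).1) fun t ht => (hR' t ht).2
    exact absurd (hyx.mono fun _ ht => EReal.coe_lt_coe_iff.1 ht.2)
      (hmax.not_extendable y y' T' (EReal.coe_lt_coe_iff.2 hTT') ((hdom T').symm ▸ hy))

lemma abs_add_pow_mul_lt {n : ℕ} {t₀ u c I : ℝ} (hn : 1 ≤ n) (ht₀ : 0 < t₀) (hc : 1 ≤ c)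
    (hI : 0 ≤ I) (h : 4 / t₀ * (1 + u ^ 2 / 2 + I) ≤ 1 / (2 * n) * c ^ (-(2 * n : ℤ))) :
    |u| + c ^ (2 * n - 1) * I < t₀ := by
  have hn' : (1 : ℝ) ≤ n := by exact_mod_cast hn
  have hP : 1 ≤ c ^ (2 * n) := one_le_pow₀ hc
  have hpow : c ^ (-(2 * n : ℤ)) = (c ^ (2 * n))⁻¹ := by rw [zpow_neg]; norm_cast
  have hsmall : 4 * (1 + u ^ 2 / 2 + I) * c ^ (2 * n) ≤ t₀ := by
    have hle : 4 / t₀ * (1 + u ^ 2 / 2 + I) ≤ (c ^ (2 * n))⁻¹ := by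
      refine h.trans ?_
      rw [hpow]
      exact mul_le_of_le_one_left (by positivity)
        ((div_le_one (by positivity)).2 (by linarith))
    rwa [div_mul_eq_mul_div, inv_eq_one_div, div_le_div_iff₀ ht₀ (by positivity), one_mul] at hle
  have hu : |u| ≤ 1 + u ^ 2 / 2 := by
    rw [← sq_abs]
    linarith [two_mul_le_add_sq |u| 1]
  calc |u| + c ^ (2 * n - 1) * I ≤ (1 + u ^ 2 / 2) * c ^ (2 * n) + c ^ (2 * n) * I := by
        gcongr
        · exact hu.trans (le_mul_of_one_le_right (by positivity) hP)
        · exact Nat.sub_le _ _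
    _ = (1 + u ^ 2 / 2 + I) * c ^ (2 * n) := by ring
    _ < 4 * (1 + u ^ 2 / 2 + I) * c ^ (2 * n) := by
        rw [mul_assoc]
        exact lt_mul_of_one_lt_left (by positivity) (by norm_num)
    _ ≤ t₀ := hsmall

lemma abs_add_abs_add_pow_mul_lt {n : ℕ} {t₀ x₀ u₀ I : ℝ} (hn : 1 ≤ n) (ht₀ : 0 < t₀) (hI : 0 ≤ I)
    (h : 4 / t₀ * (1 + u₀ ^ 2 / 2 + I) ≤ 1 / (2 * n) * (1 + |x₀ / t₀|) ^ (-(2 * n : ℤ))) :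
    |x₀| + |u₀| + (1 + |x₀ / t₀|) ^ (2 * n - 1) * I < (1 + |x₀ / t₀|) * t₀ := by
  have hsmall := abs_add_pow_mul_lt hn ht₀ (le_add_of_nonneg_right (abs_nonneg (x₀ / t₀))) hI h
  have hscale : (1 + |x₀ / t₀|) * t₀ = t₀ + |x₀| := by
    rw [abs_div, abs_of_pos ht₀, add_mul, one_mul, div_mul_cancel₀ _ ht₀.ne']
  linarith

theorem IsMaximalEmdenFowlerSolution.eq_top_and_isAsymptoticallyLinear {t₀ : ℝ} {T : EReal}
    (ht₀ : 0 < t₀) (hA : ContinuousOn A (Ici t₀))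
    (hA_int : IntegrableOn (fun t => t ^ (m + 1) * |A t|) (Ici t₀)) (hT : (t₀ : EReal) < T)
    (hmax : IsMaximalEmdenFowlerSolution A m x x' t₀ T) (hM0 : 0 ≤ M)
    (hM : |x t₀| + |t₀ * x' t₀ - x t₀| + M ^ m * ∫ t in Ici t₀, t ^ (m + 1) * |A t| < M * t₀) :
    T = ⊤ ∧ IsAsymptoticallyLinear_s6 x x' := by
  have hbound : ∀ t : ℝ, t₀ ≤ t → (t : EReal) < T → |x t| ≤ M * t ∧ |x' t| ≤ 2 * M :=
    fun t ht htT => (hmax.isSolutionOn.mono fun s hs =>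
      ⟨hs.1, (EReal.coe_le_coe_iff.2 hs.2).trans_lt htT⟩).abs_le_and_abs_deriv_le ht₀ ht hM0 hA_int
        hM
  obtain rfl : T = ⊤ := hmax.eq_top_of_forall_bounded hA hT fun b =>
    ⟨max (M * b) (2 * M), fun t ht htT =>
      ⟨(hbound t ht.1 htT).1.trans (le_max_of_le_left (by gcongr; exact ht.2)),
        (hbound t ht.1 htT).2.trans (le_max_right _ _)⟩⟩
  exact ⟨rfl, (hmax.isSolutionOn.mono fun t ht => ⟨ht, EReal.coe_lt_top t⟩).isAsymptoticallyLinear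
    ht₀ hA hA_int fun t ht => (hbound t ht (EReal.coe_lt_top t)).1⟩

theorem emden_fowler_negative_coefficient_general {n : ℕ} {t₀ : ℝ} {T : EReal} (hn : 1 ≤ n)
    (ht₀ : 0 < t₀) (hA : ContinuousOn A (Ici t₀))
    (hA_int : IntegrableOn (fun t => t ^ (2 * n) * |A t|) (Ici t₀)) (hT : (t₀ : EReal) < T)
    (hmax : IsMaximalEmdenFowlerSolution A (2 * n - 1) x x' t₀ T)
    (hinit : 4 / t₀ * (1 + (t₀ * x' t₀ - x t₀) ^ 2 / 2 + ∫ t in Ici t₀, t ^ (2 * n) * |A t|) ≤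
      1 / (2 * n) * (1 + |x t₀ / t₀|) ^ (-(2 * n : ℤ))) :
    T = ⊤ ∧ IsAsymptoticallyLinear_s6 x x' := by
  have hexp : 2 * n - 1 + 1 = 2 * n := by omega
  have hI : 0 ≤ ∫ t in Ici t₀, t ^ (2 * n) * |A t| := setIntegral_nonneg measurableSet_Ici
    fun t _ => mul_nonneg ((even_two_mul n).pow_nonneg t) (abs_nonneg _)
  have hsmall := abs_add_abs_add_pow_mul_lt hn ht₀ hI hinit
  exact hmax.eq_top_and_isAsymptoticallyLinear (M := 1 + |x t₀ / t₀|) ht₀ hA (by rwa [hexp]) hT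
    (by positivity) (by rwa [hexp])

end EmdenFowler

/-- Emden–Fowler equation `x″ + A(t)x^{2n−1} = 0` with `A ≤ 0` and
`∫_{t₀}^{∞} s^{2n}|A(s)| ds < ∞`: every (maximal, i.e. non-extendable) solution whose
initial data `u₀ = t₀x′(t₀) − x(t₀)`, `v₀ = x(t₀)/t₀` satisfy
`(4/t₀)(1 + u₀²/2 + ∫_{t₀}^{∞} t^{2n}|A(t)| dt) ≤ (1/(2n))·(1+|v₀|)^{−2n}` is defined on
all of `[t₀, ∞)` and satisfies either `x(t) = o(t)` or `x(t) = x₁t + x₂ + o(1)` with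
`x₁ ≠ 0`, as `t → +∞`. -/
theorem emden_fowler_negative_coefficient
    (n : ℕ) (hn : 1 ≤ n) (t₀ : ℝ) (ht₀ : 1 ≤ t₀) (A : ℝ → ℝ)
    (hA_cont : ContinuousOn A (Set.Ici t₀))
    (hA_nonpos : ∀ t ∈ Set.Ici t₀, A t ≤ 0)
    (hA_int : IntegrableOn (fun s => s ^ (2 * n) * |A s|) (Set.Ici t₀))
    (Tinf : EReal) (hT : (t₀ : EReal) < Tinf)
    (x x' x'' : ℝ → ℝ)
    (hx : ∀ t : ℝ, t₀ ≤ t → (t : EReal) < Tinf → HasDerivAt x (x' t) t)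
    (hx' : ∀ t : ℝ, t₀ ≤ t → (t : EReal) < Tinf → HasDerivAt x' (x'' t) t)
    (heq : ∀ t : ℝ, t₀ ≤ t → (t : EReal) < Tinf →
      x'' t + A t * x t ^ (2 * n - 1) = 0)
    (hmax : ∀ (y y' y'' : ℝ → ℝ) (T' : EReal), Tinf < T' →
      (∀ t : ℝ, t₀ ≤ t → (t : EReal) < T' → HasDerivAt y (y' t) t) →
      (∀ t : ℝ, t₀ ≤ t → (t : EReal) < T' → HasDerivAt y' (y'' t) t) →
      (∀ t : ℝ, t₀ ≤ t → (t : EReal) < T' → y'' t + A t * y t ^ (2 * n - 1) = 0) →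
      ¬ (∀ t : ℝ, t₀ ≤ t → (t : EReal) < Tinf → y t = x t))
    (hinit : 4 / t₀ * (1 + (t₀ * x' t₀ - x t₀) ^ 2 / 2 +
        ∫ t in Set.Ici t₀, t ^ (2 * n) * |A t|) ≤
      1 / (2 * n) * (1 + |x t₀ / t₀|) ^ (-(2 * n : ℤ))) :
    Tinf = ⊤ ∧
      ((fun t => x t) =o[atTop] (fun t : ℝ => t) ∨
        ∃ x₁ x₂ : ℝ, x₁ ≠ 0 ∧
          Tendsto (fun t => x t - (x₁ * t + x₂)) atTop (nhds 0)) := by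
  obtain ⟨hTinf, hlin⟩ := emden_fowler_negative_coefficient_general hn (by linarith) hA_cont hA_int
    hT (isMaximalEmdenFowlerSolution_of_add_eq_zero hx hx' heq hmax) hinit
  exact ⟨hTinf, by simpa only [smul_eq_mul, mul_comm] using hlin.isLittleO_or_exists_ne_zero⟩
end
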